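/- arXiv:0905.1183 — 3 statements merged into one kernel-verified Lean document; each statement's English description precedes it below -/
import Mathlib

section
/- There exists a universal constant c > 0 (depending only on n, s) such that: if E is a variational subsolution in B₁ ⊆ R^n and |E ∩ B₁| ≤ c, then |E ∩ B_{1/2}| = 0. -/
open MeasureTheory Metric Filter Set

/-- Interaction energy `L(A,B) = ∫∫ χ_A(x) χ_B(y) |x-y|^{-(n+s)} dx dy`, valued in `[0,∞]`. -/
noncomputable def interactionL (n : ℕ) (s : ℝ)
    (A B : Set (EuclideanSpace ℝ (Fin n))) : ENNReal :=
  ∫⁻ x in A, ∫⁻ y in B, ENNReal.ofReal (1 / ‖x - y‖ ^ ((n : ℝ) + s))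

/-- `E` is a variational subsolution in `B₁`: `L(A, E \ A) − L(A, C E) ≥ 0`
for every measurable `A ⊆ E ∩ B₁`. -/
def IsSubsolutionIn (n : ℕ) (s : ℝ) (Ω E : Set (EuclideanSpace ℝ (Fin n))) : Prop :=
  ∀ A : Set (EuclideanSpace ℝ (Fin n)), MeasurableSet A → A ⊆ E ∩ Ω →
    interactionL n s A Eᶜ ≤ interactionL n s A (E \ A)

/-!
Cutting `E` with a ball `B_ρ ⊆ B₁` and testing the subsolution property with `A = E ∩ B_ρ` bounds
`L(A, CA)` by `2 L(A, C B_ρ)`. From below, `L(A, CA)` is at least a multiple of `|A|^(1 - s/n)` by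
the fractional isoperimetric inequality. From above, the average over `ρ ∈ (r, t)` of
`L(E ∩ B_ρ, C B_ρ)` is at most `C |E ∩ B_t| / (t - r)`, because integrating in `ρ` trades the
singularity `|z|^(-n-s)` for the integrable `|z|^(1-n-s)`. Hence
`|E ∩ B_r| ≤ C |E ∩ B_t|^(1 + s/n) / (t - r)`, and a De Giorgi iteration along the radii
`1/2 + 2^(-j-1)` forces `|E ∩ B_{1/2}| = 0` once `|E ∩ B₁|` is small.
-/

open scoped ENNReal Topology

section Recursion

theorem exists_pos_const_mul_ofReal_rpow_le {C ε : ℝ≥0∞} {α : ℝ} (hC : C ≠ ∞) (hε : ε ≠ 0)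
    (hα : 0 < α) : ∃ δ : ℝ, 0 < δ ∧ C * ENNReal.ofReal δ ^ α ≤ ε := by
  have hofReal : Tendsto ENNReal.ofReal (𝓝[>] 0) (𝓝 0) := by
    simpa only [ENNReal.ofReal_zero] using
      (ENNReal.continuous_ofReal.tendsto 0).mono_left nhdsWithin_le_nhds
  have hsmall : ∀ᶠ δ in 𝓝[>] (0 : ℝ), C * ENNReal.ofReal δ ^ α ≤ ε :=
    ((ENNReal.tendsto_const_mul_rpow_nhds_zero_of_pos hC hα).comp hofReal).eventually_le_const
      (pos_iff_ne_zero.2 hε)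
  exact (eventually_mem_nhdsWithin.and hsmall).exists

theorem le_pow_mul_of_superlinear_recursion {a : ℕ → ℝ≥0∞} {C b q : ℝ≥0∞} {α : ℝ} (hα : 0 ≤ α)
    (hbq : b * q ^ α ≤ 1) (ha₀ : C * a 0 ^ α ≤ q)
    (ha : ∀ k, a (k + 1) ≤ C * b ^ k * a k ^ (1 + α)) (k : ℕ) : a k ≤ q ^ k * a 0 := by
  induction k with
  | zero => simp
  | succ k ih =>
    calc a (k + 1) ≤ C * b ^ k * a k ^ (1 + α) := ha k
      _ ≤ C * b ^ k * (q ^ k * a 0) ^ (1 + α) := by gcongr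
      _ = (b * q ^ α) ^ k * (C * a 0 ^ α) * (q ^ k * a 0) := by
        rw [ENNReal.rpow_add_of_nonneg 1 α zero_le_one hα, ENNReal.rpow_one,
          ENNReal.mul_rpow_of_nonneg _ _ hα, mul_pow, ← ENNReal.rpow_natCast_mul,
          mul_comm (k : ℝ), ENNReal.rpow_mul_natCast]
        ring
      _ ≤ 1 ^ k * q * (q ^ k * a 0) := by gcongr
      _ = q ^ (k + 1) * a 0 := by ring

theorem exists_pos_forall_tendsto_zero_of_superlinear_recursion {C b : ℝ≥0∞} {α : ℝ} (hC : C ≠ ∞)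
    (hb : b ≠ ∞) (hα : 0 < α) : ∃ c : ℝ, 0 < c ∧ ∀ a : ℕ → ℝ≥0∞, a 0 ≤ ENNReal.ofReal c →
      (∀ k, a (k + 1) ≤ C * b ^ k * a k ^ (1 + α)) → Tendsto a atTop (𝓝 0) := by
  obtain ⟨δ, hδ, hbδ⟩ := exists_pos_const_mul_ofReal_rpow_le hb one_ne_zero hα
  obtain ⟨q, hq, hq1, hbq⟩ : ∃ q : ℝ≥0∞, q ≠ 0 ∧ q < 1 ∧ b * q ^ α ≤ 1 := by
    refine ⟨min (ENNReal.ofReal δ) 2⁻¹, ?_, ?_, ?_⟩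
    · simp [hδ]
    · exact (min_le_right _ _).trans_lt (by simp)
    · exact le_trans (by gcongr; exact min_le_left _ _) hbδ
  obtain ⟨c, hc, hCc⟩ := exists_pos_const_mul_ofReal_rpow_le hC hq hα
  refine ⟨c, hc, fun a ha₀ ha ↦ ?_⟩
  have hdecay : ∀ k, a k ≤ q ^ k * a 0 :=
    le_pow_mul_of_superlinear_recursion hα.le hbq (le_trans (by gcongr) hCc) ha
  have hlim : Tendsto (fun k ↦ q ^ k * a 0) atTop (𝓝 0) := by
    simpa only [zero_mul] using ENNReal.Tendsto.mul_const
      (ENNReal.tendsto_pow_atTop_nhds_zero_of_lt_one hq1)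
      (Or.inr (ha₀.trans_lt ENNReal.ofReal_lt_top).ne)
  exact tendsto_of_tendsto_of_tendsto_of_le_of_le tendsto_const_nhds hlim (fun _ ↦ zero_le) hdecay

end Recursion

section Interaction

variable {V : Type*} [AddGroup V] [MeasurableSpace V]

/-- The interaction energy `∫_A ∫_B k (x - y) dy dx` of two sets for a nonnegative, possibly
singular kernel `k`; it takes values in `[0, ∞]`. -/
noncomputable def kernelInteraction (μ : Measure V) (k : V → ℝ≥0∞) (A B : Set V) : ℝ≥0∞ :=
  ∫⁻ x in A, ∫⁻ y in B, k (x - y) ∂μ ∂μ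

/-- Variational subsolutions of the nonlocal minimal surface equation with kernel `k`: removing a
measurable piece of `E ∩ Ω` from `E` does not decrease the energy. The inequality is stated without
subtraction, both sides being possibly infinite. -/
def IsKernelSubsolution (μ : Measure V) (k : V → ℝ≥0∞) (Ω E : Set V) : Prop :=
  ∀ A, MeasurableSet A → A ⊆ E ∩ Ω → kernelInteraction μ k A Eᶜ ≤ kernelInteraction μ k A (E \ A)

variable {μ : Measure V} {k : V → ℝ≥0∞} {A B Ω E : Set V}

theorem kernelInteraction_mono_right {B' : Set V} (h : B ⊆ B') :
    kernelInteraction μ k A B ≤ kernelInteraction μ k A B' :=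
  lintegral_mono fun _ ↦ lintegral_mono_set h

variable [MeasurableSub₂ V]

theorem kernelInteraction_union_right_le [SFinite μ] {B' : Set V} (hk : Measurable k) :
    kernelInteraction μ k A (B ∪ B') ≤ kernelInteraction μ k A B + kernelInteraction μ k A B' := by
  have hmeas : Measurable fun x ↦ ∫⁻ y in B, k (x - y) ∂μ :=
    (hk.comp measurable_sub).lintegral_prod_right'
  unfold kernelInteraction
  rw [← lintegral_add_left hmeas]
  exact lintegral_mono fun x ↦ lintegral_union_le _ _ _

theorem IsKernelSubsolution.kernelInteraction_compl_le [SFinite μ] (hk : Measurable k)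
    (hE : MeasurableSet E) (hsub : IsKernelSubsolution μ k Ω E) (hB : MeasurableSet B)
    (hBΩ : B ⊆ Ω) :
    kernelInteraction μ k (E ∩ B) (E ∩ B)ᶜ ≤ 2 * kernelInteraction μ k (E ∩ B) Bᶜ := by
  have hsplit : (E ∩ B)ᶜ = Eᶜ ∪ E \ (E ∩ B) := by grind
  have houtside : E \ (E ∩ B) ⊆ Bᶜ := fun y hy hyB ↦ hy.2 ⟨hy.1, hyB⟩
  calc kernelInteraction μ k (E ∩ B) (E ∩ B)ᶜ
      ≤ kernelInteraction μ k (E ∩ B) Eᶜ + kernelInteraction μ k (E ∩ B) (E \ (E ∩ B)) := by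
        rw [hsplit]
        exact kernelInteraction_union_right_le hk
    _ ≤ kernelInteraction μ k (E ∩ B) (E \ (E ∩ B)) +
          kernelInteraction μ k (E ∩ B) (E \ (E ∩ B)) := by
        gcongr
        exact hsub _ (hE.inter hB) (inter_subset_inter_right _ hBΩ)
    _ = 2 * kernelInteraction μ k (E ∩ B) (E \ (E ∩ B)) := (two_mul _).symm
    _ ≤ 2 * kernelInteraction μ k (E ∩ B) Bᶜ := by
        gcongr
        exact kernelInteraction_mono_right houtside

end Interaction

section Coarea

variable {V : Type*} [NormedAddCommGroup V] {k : V → ℝ≥0∞}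

/-- The contribution to the interaction across the sphere of radius `ρ` about `x₀` of a pair
`(x, y)`: it is `k (x - y)` if `x` lies inside the sphere and `y` does not, and `0` otherwise. -/
noncomputable def crossingKernel (k : V → ℝ≥0∞) (x₀ : V) (ρ : ℝ) (x y : V) : ℝ≥0∞ :=
  (Ioc (dist x x₀) (dist y x₀)).indicator (fun _ ↦ k (x - y)) ρ

theorem setLIntegral_crossingKernel_le (I : Set ℝ) (x₀ x y : V) :
    ∫⁻ ρ in I, crossingKernel k x₀ ρ x y ≤ k (x - y) * min ‖x - y‖ₑ (volume I) := by
  have hdist : dist y x₀ - dist x x₀ ≤ ‖x - y‖ := by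
    rw [sub_le_iff_le_add, ← dist_eq_norm, dist_comm x y]
    exact dist_triangle y x x₀
  calc ∫⁻ ρ in I, crossingKernel k x₀ ρ x y
      = k (x - y) * volume (Ioc (dist x x₀) (dist y x₀) ∩ I) := by
        unfold crossingKernel
        rw [lintegral_indicator_const measurableSet_Ioc, Measure.restrict_apply measurableSet_Ioc]
    _ ≤ k (x - y) * min ‖x - y‖ₑ (volume I) := by
        gcongr
        refine le_min ((measure_mono inter_subset_left).trans ?_) (measure_mono inter_subset_right)
        rw [Real.volume_Ioc, ← ofReal_norm]
        exact ENNReal.ofReal_le_ofReal hdist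

variable [MeasurableSpace V] [BorelSpace V] {μ : Measure V} {F : Set V}

theorem kernelInteraction_inter_ball_compl_le (hF : MeasurableSet F) (x₀ : V) (ρ : ℝ) :
    kernelInteraction μ k (F ∩ ball x₀ ρ) (ball x₀ ρ)ᶜ ≤
      ∫⁻ x in F, ∫⁻ y, crossingKernel k x₀ ρ x y ∂μ ∂μ := by
  refine (setLIntegral_mono' (hF.inter measurableSet_ball) fun x hx ↦ ?_).trans
    (lintegral_mono_set inter_subset_left)
  rw [← lintegral_indicator measurableSet_ball.compl]
  refine lintegral_mono fun y ↦ indicator_le (fun y hy ↦ ?_) y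
  have hρ : ρ ∈ Ioc (dist x x₀) (dist y x₀) := ⟨hx.2, not_lt.1 hy⟩
  exact (indicator_of_mem hρ fun _ ↦ k (x - y)).ge

variable [SecondCountableTopology V]

theorem measurable_crossingKernel (hk : Measurable k) (x₀ : V) :
    Measurable fun p : ℝ × V × V ↦ crossingKernel k x₀ p.1 p.2.1 p.2.2 := by
  have hcross : MeasurableSet {p : ℝ × V × V | p.1 ∈ Ioc (dist p.2.1 x₀) (dist p.2.2 x₀)} :=
    (measurableSet_lt (by fun_prop) measurable_fst).inter
      (measurableSet_le measurable_fst (by fun_prop))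
  exact Measurable.indicator (f := fun p : ℝ × V × V ↦ k (p.2.1 - p.2.2)) (by fun_prop) hcross

/-- Fubini: a pair `(x, y)` is separated by the sphere of radius `ρ` only for `ρ` in an interval of
length at most `‖x - y‖`, so averaging over `ρ` gains a factor that tames the kernel at `0`. -/
theorem setLIntegral_kernelInteraction_inter_ball_le [SFinite μ] [μ.IsAddLeftInvariant]
    [μ.IsNegInvariant] (hk : Measurable k) (hF : MeasurableSet F) (x₀ : V) (I : Set ℝ) :
    ∫⁻ ρ in I, kernelInteraction μ k (F ∩ ball x₀ ρ) (ball x₀ ρ)ᶜ ≤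
      (∫⁻ z, k z * min ‖z‖ₑ (volume I) ∂μ) * μ F := by
  have hmeas := measurable_crossingKernel hk x₀
  have hmeas_ρx : Measurable fun q : ℝ × V ↦ ∫⁻ y, crossingKernel k x₀ q.1 q.2 y ∂μ :=
    (hmeas.comp MeasurableEquiv.prodAssoc.measurable).lintegral_prod_right'
  have hmeas_ρy (x : V) : Measurable fun q : ℝ × V ↦ crossingKernel k x₀ q.1 x q.2 :=
    hmeas.comp (f := fun q : ℝ × V ↦ (q.1, x, q.2)) (by fun_prop)
  calc ∫⁻ ρ in I, kernelInteraction μ k (F ∩ ball x₀ ρ) (ball x₀ ρ)ᶜ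
      ≤ ∫⁻ ρ in I, ∫⁻ x in F, ∫⁻ y, crossingKernel k x₀ ρ x y ∂μ ∂μ :=
        lintegral_mono fun ρ ↦ kernelInteraction_inter_ball_compl_le hF x₀ ρ
    _ = ∫⁻ x in F, (∫⁻ ρ in I, ∫⁻ y, crossingKernel k x₀ ρ x y ∂μ) ∂μ :=
        lintegral_lintegral_swap hmeas_ρx.aemeasurable
    _ = ∫⁻ x in F, ∫⁻ y, (∫⁻ ρ in I, crossingKernel k x₀ ρ x y) ∂μ ∂μ :=
        lintegral_congr fun x ↦ lintegral_lintegral_swap (hmeas_ρy x).aemeasurable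
    _ ≤ ∫⁻ x in F, ∫⁻ y, k (x - y) * min ‖x - y‖ₑ (volume I) ∂μ ∂μ :=
        lintegral_mono fun x ↦ lintegral_mono fun y ↦ setLIntegral_crossingKernel_le I x₀ x y
    _ = ∫⁻ _ in F, ∫⁻ z, k z * min ‖z‖ₑ (volume I) ∂μ ∂μ :=
        lintegral_congr fun x ↦
          lintegral_sub_left_eq_self (fun z ↦ k z * min ‖z‖ₑ (volume I)) x
    _ = (∫⁻ z, k z * min ‖z‖ₑ (volume I) ∂μ) * μ F := setLIntegral_const _ _

end Coarea

section Isoperimetric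

variable {V : Type*} [NormedAddCommGroup V] [MeasurableSpace V] {μ : Measure V} {k : V → ℝ≥0∞}
  {lam : ℝ≥0∞} {A : Set V}

theorem two_div_measure_ball_rpow_ne_top [μ.IsOpenPosMeasure] {p : ℝ} (hp : 0 ≤ p) :
    (2 / μ (ball 0 1)) ^ p ≠ ∞ :=
  ENNReal.rpow_ne_top_of_nonneg hp <|
    ENNReal.div_ne_top ENNReal.ofNat_ne_top (measure_ball_pos μ 0 one_pos).ne'

variable [BorelSpace V]

theorem mul_measure_le_rpow_mul_setLIntegral_compl {p R : ℝ} (hp : 0 ≤ p)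
    (hk : ∀ z ≠ 0, lam ≤ ‖z‖ₑ ^ p * k z) (hA : MeasurableSet A) (hAfin : μ A ≠ ∞) {x : V}
    (hx : x ∈ A) (hR : 2 * μ A ≤ μ (ball x R)) :
    lam * μ A ≤ ENNReal.ofReal R ^ p * ∫⁻ y in Aᶜ, k (x - y) ∂μ := by
  have hroom : μ A ≤ μ (ball x R \ A) :=
    (ENNReal.le_sub_of_add_le_right hAfin (by rwa [← two_mul])).trans le_measure_sdiff
  have hkernel : ∀ y ∈ ball x R \ A, lam ≤ ENNReal.ofReal R ^ p * k (x - y) := by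
    intro y ⟨hyR, hyA⟩
    have hxy : x - y ≠ 0 := sub_ne_zero.2 (ne_of_mem_of_not_mem hx hyA)
    refine (hk _ hxy).trans ?_
    gcongr
    rw [← ofReal_norm, ← dist_eq_norm, dist_comm]
    exact ENNReal.ofReal_le_ofReal (mem_ball.1 hyR).le
  calc lam * μ A ≤ lam * μ (ball x R \ A) := by gcongr
    _ = ∫⁻ _ in ball x R \ A, lam ∂μ := (setLIntegral_const _ _).symm
    _ ≤ ∫⁻ y in ball x R \ A, ENNReal.ofReal R ^ p * k (x - y) ∂μ :=
        setLIntegral_mono' (measurableSet_ball.diff hA) hkernel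
    _ ≤ ∫⁻ y in Aᶜ, ENNReal.ofReal R ^ p * k (x - y) ∂μ := lintegral_mono_set fun _ hy ↦ hy.2
    _ = ENNReal.ofReal R ^ p * ∫⁻ y in Aᶜ, k (x - y) ∂μ :=
        lintegral_const_mul' _ _ (ENNReal.rpow_ne_top_of_nonneg hp ENNReal.ofReal_ne_top)

variable [NormedSpace ℝ V] [FiniteDimensional ℝ V] [Nontrivial V] [μ.IsAddHaarMeasure]

theorem measure_ball_toReal_rpow_inv_finrank {m : ℝ≥0∞} (hm : m ≠ ∞) (x : V) :
    μ (ball x ((m / μ (ball 0 1)) ^ (Module.finrank ℝ V : ℝ)⁻¹).toReal) = m := by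
  have hω₀ : μ (ball 0 1) ≠ 0 := (measure_ball_pos μ 0 one_pos).ne'
  have hω : μ (ball 0 1) ≠ ∞ := measure_ball_lt_top.ne
  have hd : (Module.finrank ℝ V : ℝ) ≠ 0 := Nat.cast_ne_zero.2 Module.finrank_pos.ne'
  have hratio : m / μ (ball 0 1) ≠ ∞ := ENNReal.div_ne_top hm hω₀
  rw [Measure.addHaar_ball μ x ENNReal.toReal_nonneg, ← ENNReal.toReal_pow, ENNReal.ofReal_toReal,
    ← ENNReal.rpow_natCast, ENNReal.rpow_inv_rpow hd, ENNReal.div_mul_cancel hω₀ hω]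
  exact ENNReal.pow_ne_top (ENNReal.rpow_ne_top_of_nonneg (by positivity) hratio)

/-- Compare with the ball about `x` of twice the measure of `A`: half of it lies outside `A`. -/
theorem le_mul_measure_rpow_mul_setLIntegral_compl {s : ℝ} (hs : 0 ≤ s)
    (hk : ∀ z ≠ 0, lam ≤ ‖z‖ₑ ^ (Module.finrank ℝ V + s) * k z) (hA : MeasurableSet A)
    (hA₀ : μ A ≠ 0) (hAfin : μ A ≠ ∞) {x : V} (hx : x ∈ A) :
    lam ≤ (2 / μ (ball 0 1)) ^ (1 + s / Module.finrank ℝ V) * μ A ^ (s / Module.finrank ℝ V) *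
      ∫⁻ y in Aᶜ, k (x - y) ∂μ := by
  set d : ℝ := (Module.finrank ℝ V : ℝ)
  have hd : 0 < d := Nat.cast_pos.2 Module.finrank_pos
  set R : ℝ := ((2 * μ A / μ (ball 0 1)) ^ d⁻¹).toReal with hR_def
  have hball : μ (ball x R) = 2 * μ A :=
    measure_ball_toReal_rpow_inv_finrank (ENNReal.mul_ne_top ENNReal.ofNat_ne_top hAfin) x
  have hratio : 2 * μ A / μ (ball 0 1) ≠ ∞ :=
    ENNReal.div_ne_top (ENNReal.mul_ne_top ENNReal.ofNat_ne_top hAfin)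
      (measure_ball_pos μ 0 one_pos).ne'
  have hRpow : ENNReal.ofReal R ^ (d + s) =
      (2 / μ (ball 0 1)) ^ (1 + s / d) * μ A ^ (s / d) * μ A := by
    rw [hR_def, ENNReal.ofReal_toReal (ENNReal.rpow_ne_top_of_nonneg (by positivity) hratio),
      ← ENNReal.rpow_mul, show d⁻¹ * (d + s) = 1 + s / d by field_simp,
      ENNReal.mul_div_right_comm, ENNReal.mul_rpow_of_nonneg _ _ (by positivity),
      ENNReal.rpow_add_of_nonneg (x := μ A) 1 (s / d) zero_le_one (by positivity),
      ENNReal.rpow_one]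
    ring
  have hmul := mul_measure_le_rpow_mul_setLIntegral_compl (by positivity) hk hA hAfin hx hball.ge
  rwa [hRpow, mul_right_comm _ (μ A), ENNReal.mul_le_mul_iff_left hA₀ hAfin] at hmul

theorem mul_measure_le_mul_kernelInteraction_compl {s : ℝ} (hs : 0 ≤ s)
    (hk : ∀ z ≠ 0, lam ≤ ‖z‖ₑ ^ (Module.finrank ℝ V + s) * k z) (hA : MeasurableSet A)
    (hAfin : μ A ≠ ∞) :
    lam * μ A ≤ (2 / μ (ball 0 1)) ^ (1 + s / Module.finrank ℝ V) *
      μ A ^ (s / Module.finrank ℝ V) * kernelInteraction μ k A Aᶜ := by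
  rcases eq_or_ne (μ A) 0 with hA₀ | hA₀
  · simp [hA₀]
  have hconst : (2 / μ (ball 0 1)) ^ (1 + s / Module.finrank ℝ V) *
      μ A ^ (s / Module.finrank ℝ V) ≠ ∞ :=
    ENNReal.mul_ne_top (two_div_measure_ball_rpow_ne_top (by positivity))
      (ENNReal.rpow_ne_top_of_nonneg (by positivity) hAfin)
  rw [← setLIntegral_const, kernelInteraction, ← lintegral_const_mul' _ _ hconst]
  exact setLIntegral_mono' hA fun x hx ↦
    le_mul_measure_rpow_mul_setLIntegral_compl hs hk hA hA₀ hAfin hx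

end Isoperimetric

section Clearing

variable {V : Type*} [NormedAddCommGroup V] [NormedSpace ℝ V] [FiniteDimensional ℝ V]
  [Nontrivial V] [MeasurableSpace V] [BorelSpace V] {μ : Measure V} [μ.IsAddHaarMeasure]
  {k : V → ℝ≥0∞} {lam : ℝ≥0∞} {s : ℝ} {B Ω E : Set V}

theorem IsKernelSubsolution.mul_measure_inter_le_mul_kernelInteraction (hs : 0 ≤ s)
    (hk : Measurable k) (hk_lower : ∀ z ≠ 0, lam ≤ ‖z‖ₑ ^ (Module.finrank ℝ V + s) * k z)
    (hE : MeasurableSet E) (hsub : IsKernelSubsolution μ k Ω E) (hB : MeasurableSet B)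
    (hBΩ : B ⊆ Ω) (hfin : μ (E ∩ B) ≠ ∞) :
    lam * μ (E ∩ B) ≤ (2 / μ (ball 0 1)) ^ (1 + s / Module.finrank ℝ V) *
      μ (E ∩ B) ^ (s / Module.finrank ℝ V) * (2 * kernelInteraction μ k (E ∩ B) Bᶜ) :=
  (mul_measure_le_mul_kernelInteraction_compl hs hk_lower (hE.inter hB) hfin).trans <|
    mul_le_mul_right (hsub.kernelInteraction_compl_le hk hE hB hBΩ) _

theorem IsKernelSubsolution.mul_measure_inter_ball_le (hs : 0 ≤ s) (hk : Measurable k)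
    (hk_lower : ∀ z ≠ 0, lam ≤ ‖z‖ₑ ^ (Module.finrank ℝ V + s) * k z)
    (hE : MeasurableSet E) (hsub : IsKernelSubsolution μ k Ω E) {x₀ : V} {r t : ℝ}
    (ht : ball x₀ t ⊆ Ω) :
    lam * μ (E ∩ ball x₀ r) * ENNReal.ofReal (t - r) ≤
      (2 / μ (ball 0 1)) ^ (1 + s / Module.finrank ℝ V) * 2 *
        (∫⁻ z, k z * min ‖z‖ₑ (ENNReal.ofReal (t - r)) ∂μ) *
        μ (E ∩ ball x₀ t) ^ (1 + s / Module.finrank ℝ V) := by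
  set α : ℝ := s / Module.finrank ℝ V
  set C : ℝ≥0∞ := (2 / μ (ball 0 1)) ^ (1 + α)
  set F : Set V := E ∩ ball x₀ t
  have hα : 0 ≤ α := by positivity
  have hfin (ρ : ℝ) : μ (E ∩ ball x₀ ρ) ≠ ∞ :=
    measure_ne_top_of_subset inter_subset_right measure_ball_lt_top.ne
  have hC : C * μ F ^ α * 2 ≠ ∞ := by
    have := hfin t
    have := two_div_measure_ball_rpow_ne_top (μ := μ) (add_nonneg zero_le_one hα)
    finiteness
  have hslice : ∀ ρ ∈ Ioo r t, lam * μ (E ∩ ball x₀ r) ≤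
      C * μ F ^ α * 2 * kernelInteraction μ k (F ∩ ball x₀ ρ) (ball x₀ ρ)ᶜ := by
    intro ρ ⟨hrρ, hρt⟩
    have hFρ : F ∩ ball x₀ ρ = E ∩ ball x₀ ρ := by
      rw [inter_assoc, inter_eq_self_of_subset_right (ball_subset_ball hρt.le)]
    have hEF : E ∩ ball x₀ ρ ⊆ F := inter_subset_inter_right _ (ball_subset_ball hρt.le)
    rw [hFρ, mul_assoc _ 2]
    calc lam * μ (E ∩ ball x₀ r) ≤ lam * μ (E ∩ ball x₀ ρ) := by gcongr
      _ ≤ _ := hsub.mul_measure_inter_le_mul_kernelInteraction hs hk hk_lower hE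
          measurableSet_ball ((ball_subset_ball hρt.le).trans ht) (hfin ρ)
      _ ≤ C * μ F ^ α * (2 * kernelInteraction μ k (E ∩ ball x₀ ρ) (ball x₀ ρ)ᶜ) := by gcongr
  calc lam * μ (E ∩ ball x₀ r) * ENNReal.ofReal (t - r)
      = ∫⁻ _ in Ioo r t, lam * μ (E ∩ ball x₀ r) := by rw [setLIntegral_const, Real.volume_Ioo]
    _ ≤ ∫⁻ ρ in Ioo r t, C * μ F ^ α * 2 *
          kernelInteraction μ k (F ∩ ball x₀ ρ) (ball x₀ ρ)ᶜ :=
        setLIntegral_mono' measurableSet_Ioo hslice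
    _ = C * μ F ^ α * 2 *
          ∫⁻ ρ in Ioo r t, kernelInteraction μ k (F ∩ ball x₀ ρ) (ball x₀ ρ)ᶜ :=
        lintegral_const_mul' _ _ hC
    _ ≤ C * μ F ^ α * 2 * ((∫⁻ z, k z * min ‖z‖ₑ (ENNReal.ofReal (t - r)) ∂μ) * μ F) := by
        gcongr
        simpa only [Real.volume_Ioo] using setLIntegral_kernelInteraction_inter_ball_le hk
          (hE.inter measurableSet_ball) x₀ (Ioo r t)
    _ = C * 2 * (∫⁻ z, k z * min ‖z‖ₑ (ENNReal.ofReal (t - r)) ∂μ) * μ F ^ (1 + α) := by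
        rw [ENNReal.rpow_add_of_nonneg 1 α zero_le_one hα, ENNReal.rpow_one]
        ring

theorem IsKernelSubsolution.mul_measure_inter_ball_dyadic_le (hs : 0 ≤ s) (hk : Measurable k)
    (hk_lower : ∀ z ≠ 0, lam ≤ ‖z‖ₑ ^ (Module.finrank ℝ V + s) * k z) {x₀ : V}
    (hE : MeasurableSet E) (hsub : IsKernelSubsolution μ k (ball x₀ 1) E) (j : ℕ) :
    lam * μ (E ∩ ball x₀ (1 / 2 + (1 / 2) ^ (j + 2))) ≤
      (2 / μ (ball 0 1)) ^ (1 + s / Module.finrank ℝ V) * 8 * (∫⁻ z, k z * min ‖z‖ₑ 1 ∂μ) *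
        2 ^ j * μ (E ∩ ball x₀ (1 / 2 + (1 / 2) ^ (j + 1))) ^ (1 + s / Module.finrank ℝ V) := by
  set r : ℝ := 1 / 2 + (1 / 2) ^ (j + 2) with hr
  set t : ℝ := 1 / 2 + (1 / 2) ^ (j + 1) with ht
  have hgap : t - r = (1 / 2) ^ (j + 2) := by rw [hr, ht]; ring
  have ht1 : t ≤ 1 := by
    have : (1 / 2 : ℝ) ^ (j + 1) ≤ 1 / 2 := pow_le_of_le_one (by norm_num) (by norm_num) (by simp)
    linarith
  have hgap1 : ENNReal.ofReal (t - r) ≤ 1 := by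
    rw [hgap, ENNReal.ofReal_le_one]
    exact pow_le_one₀ (by norm_num) (by norm_num)
  have hinv : ENNReal.ofReal (t - r) * (4 * 2 ^ j) = 1 := by
    rw [hgap, ← ENNReal.ofReal_ofNat 4, ← ENNReal.ofReal_ofNat 2, ← ENNReal.ofReal_pow (by simp),
      ← ENNReal.ofReal_mul (by simp), ← ENNReal.ofReal_mul (by positivity), ← ENNReal.ofReal_one,
      pow_add, one_div_pow]
    congr 1
    field_simp
    norm_num
  have hstep := hsub.mul_measure_inter_ball_le (r := r) hs hk hk_lower hE (ball_subset_ball ht1)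
  calc lam * μ (E ∩ ball x₀ r)
      = lam * μ (E ∩ ball x₀ r) * ENNReal.ofReal (t - r) * (4 * 2 ^ j) := by
        rw [mul_assoc _ (ENNReal.ofReal _), hinv, mul_one]
    _ ≤ (2 / μ (ball 0 1)) ^ (1 + s / Module.finrank ℝ V) * 2 *
          (∫⁻ z, k z * min ‖z‖ₑ 1 ∂μ) * μ (E ∩ ball x₀ t) ^ (1 + s / Module.finrank ℝ V) *
          (4 * 2 ^ j) := by grw [hstep, hgap1]
    _ = _ := by ring

theorem subsolution_clearing_general (hs : 0 < s) (hk : Measurable k) (hlam : lam ≠ 0)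
    (hk_lower : ∀ z ≠ 0, lam ≤ ‖z‖ₑ ^ (Module.finrank ℝ V + s) * k z)
    (hk_int : ∫⁻ z, k z * min ‖z‖ₑ 1 ∂μ ≠ ∞) :
    ∃ c : ℝ, 0 < c ∧ ∀ (x₀ : V) (E : Set V), MeasurableSet E →
      IsKernelSubsolution μ k (ball x₀ 1) E → μ (E ∩ ball x₀ 1) ≤ ENNReal.ofReal c →
      μ (E ∩ ball x₀ (1 / 2)) = 0 := by
  set α : ℝ := s / Module.finrank ℝ V
  have hα : 0 < α := div_pos hs (Nat.cast_pos.2 Module.finrank_pos)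
  have hω := two_div_measure_ball_rpow_ne_top (μ := μ) (p := 1 + α) (by positivity)
  set D : ℝ≥0∞ := (2 / μ (ball 0 1)) ^ (1 + α) * 8 * ∫⁻ z, k z * min ‖z‖ₑ 1 ∂μ
  have hD : D ≠ ∞ := by finiteness
  obtain ⟨c, hc, hdecay⟩ := exists_pos_forall_tendsto_zero_of_superlinear_recursion
    (ENNReal.div_ne_top hD hlam) (ENNReal.ofNat_ne_top (n := 2)) hα
  refine ⟨c, hc, fun x₀ E hE hsub hsmall ↦ ?_⟩
  set a : ℕ → ℝ≥0∞ := fun j ↦ μ (E ∩ ball x₀ (1 / 2 + (1 / 2) ^ (j + 1)))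
  have ha₀ : a 0 ≤ ENNReal.ofReal c := by
    have hradius : (1 / 2 : ℝ) + (1 / 2) ^ (0 + 1) = 1 := by norm_num
    simpa only [a, hradius] using hsmall
  have hfin (j : ℕ) : a j ≠ ∞ :=
    measure_ne_top_of_subset inter_subset_right measure_ball_lt_top.ne
  have hrec (j : ℕ) : a (j + 1) ≤ D / lam * 2 ^ j * a j ^ (1 + α) := by
    have hstep := hsub.mul_measure_inter_ball_dyadic_le hs.le hk hk_lower hE j
    have hbound : D * 2 ^ j * a j ^ (1 + α) ≠ ∞ := by
      have := hfin j
      finiteness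
    rw [← ENNReal.mul_div_right_comm, ← ENNReal.mul_div_right_comm,
      ENNReal.le_div_iff_mul_le (Or.inl hlam) (Or.inr hbound), mul_comm]
    exact hstep
  have hlower (j : ℕ) : μ (E ∩ ball x₀ (1 / 2)) ≤ a j := by
    have : (0 : ℝ) ≤ (1 / 2) ^ (j + 1) := by positivity
    exact measure_mono (inter_subset_inter_right _ (ball_subset_ball (by linarith)))
  exact le_zero_iff.1 (ge_of_tendsto' (hdecay a ha₀ hrec) hlower)

end Clearing

section RieszKernel

theorem integrableOn_Ioi_pow_mul_riesz_mul_min {d : ℕ} (hd : 0 < d) {s : ℝ} (hs : s ∈ Ioo 0 1) :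
    IntegrableOn (fun r : ℝ ↦ r ^ (d - 1) • (1 / r ^ (d + s) * min r 1)) (Ioi 0) := by
  have hmin : IntegrableOn (fun r : ℝ ↦ r ^ (-s - 1) * min r 1) (Ioi 0) := by
    refine mellin_convergent_of_isBigO_scalar (a := 0) (b := -1) ?_ ?_ (by linarith [hs.1]) ?_
      (by linarith [hs.2])
    · exact (by fun_prop : Continuous fun r : ℝ ↦ min r 1).locallyIntegrable.locallyIntegrableOn _
    · refine Asymptotics.IsBigO.of_bound 1 ?_
      filter_upwards [eventually_ge_atTop 1] with r hr
      simp [hr]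
    · refine Asymptotics.IsBigO.of_bound 1 ?_
      filter_upwards [Ioo_mem_nhdsGT one_pos] with r hr
      simp [hr.2.le]
  refine hmin.congr_fun (fun r (hr : 0 < r) ↦ ?_) measurableSet_Ioi
  have hexp : r ^ (-s - 1) = r ^ (d - 1) * (1 / r ^ (d + s)) := by
    rw [one_div, ← Real.rpow_neg hr.le, ← Real.rpow_natCast, ← Real.rpow_add hr,
      Nat.cast_pred hd]
    congr 1
    ring
  simp only [hexp, smul_eq_mul, mul_assoc]

variable {V : Type*} [NormedAddCommGroup V]

theorem one_le_enorm_rpow_mul_riesz {z : V} (hz : z ≠ 0) {p : ℝ} (hp : 0 ≤ p) :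
    1 ≤ ‖z‖ₑ ^ p * ENNReal.ofReal (1 / ‖z‖ ^ p) := by
  have hpos : 0 < ‖z‖ ^ p := Real.rpow_pos_of_pos (norm_pos_iff.2 hz) p
  rw [← ofReal_norm, ENNReal.ofReal_rpow_of_nonneg (norm_nonneg z) hp,
    ← ENNReal.ofReal_mul hpos.le, mul_one_div_cancel hpos.ne', ENNReal.ofReal_one]

theorem lintegral_riesz_mul_min_enorm_lt_top [NormedSpace ℝ V] [FiniteDimensional ℝ V]
    [Nontrivial V] [MeasurableSpace V] [BorelSpace V] (μ : Measure V) [μ.IsAddHaarMeasure]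
    {s : ℝ} (hs : s ∈ Ioo 0 1) :
    ∫⁻ z : V, ENNReal.ofReal (1 / ‖z‖ ^ (Module.finrank ℝ V + s)) * min ‖z‖ₑ 1 ∂μ < ∞ := by
  have hint := (integrable_fun_norm_addHaar μ).2
    (integrableOn_Ioi_pow_mul_riesz_mul_min (Module.finrank_pos (R := ℝ) (M := V)) hs)
  convert hint.lintegral_lt_top using 3 with z
  rw [ENNReal.ofReal_mul (by positivity), ENNReal.ofReal_min, ofReal_norm, ENNReal.ofReal_one]

end RieszKernel

/-- There is a universal `c > 0` such that any variational subsolution in `B₁` with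
`|E ∩ B₁| ≤ c` has `|E ∩ B_{1/2}| = 0`. -/
theorem subsolution_clearing (n : ℕ) (hn : 1 ≤ n) (s : ℝ) (hs : s ∈ Set.Ioo (0:ℝ) 1) :
    ∃ c : ℝ, 0 < c ∧ ∀ E : Set (EuclideanSpace ℝ (Fin n)), MeasurableSet E →
      IsSubsolutionIn n s (ball (0 : EuclideanSpace ℝ (Fin n)) 1) E →
      volume (E ∩ ball (0 : EuclideanSpace ℝ (Fin n)) 1) ≤ ENNReal.ofReal c →
      volume (E ∩ ball (0 : EuclideanSpace ℝ (Fin n)) (1/2)) = 0 := by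
  have : Nonempty (Fin n) := ⟨⟨0, hn⟩⟩
  have hint := lintegral_riesz_mul_min_enorm_lt_top
    (volume : Measure (EuclideanSpace ℝ (Fin n))) hs
  have hclear := subsolution_clearing_general (μ := volume) hs.1 (by fun_prop) one_ne_zero
    (fun z hz ↦ one_le_enorm_rpow_mul_riesz hz (add_nonneg (Nat.cast_nonneg _) hs.1.le)) hint.ne
  rw [finrank_euclideanSpace_fin] at hclear
  exact hclear.imp fun c ⟨hc, h⟩ ↦ ⟨hc, h 0⟩
end

section
/- Let E be a variational subsolution in Ω. There exists c > 0 depending only on n and s such that for every x ∈ ∂E with B_r(x) ∩ E ⊆ Ω, one has |E ∩ B_r(x)| ≥ c r^n. -/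
open MeasureTheory Metric Filter Set

/-!
Fix `x` and test the subsolution inequality with `A = E ∩ ball x ρ`: since `Aᶜ = Eᶜ ∪ (E \ A)`, the
whole nonlocal perimeter of `A` is at most twice its interaction with `E \ A`. The perimeter is
bounded below by a nonlocal isoperimetric inequality in terms of the volume radius of `A`. The
interaction with `E \ A` is controlled after averaging over `ρ ∈ (τ, t)`: the kernel
`|p - y|^{-(d + s)}` is then weighted by `min (t - τ) |p - y|`, which makes it integrable because
`0 < s < 1`. Comparing both bounds shows that if `w` is the volume radius of `E ∩ ball x t`, then
shrinking `t` by `K w` halves it, with `K` depending only on the dimension `d` and `s`. If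
`r > 2 K w` for the volume radius `w` of `E ∩ ball x r`, iterating this decreases the radius by at
most `K w (1 + 1/2 + 1/4 + ⋯) = 2 K w < r` in total while the volume radius tends to zero, so `E`
would be null in a ball around `x`.
-/

open Module (finrank)
open scoped ENNReal

section Interaction

variable {X : Type*} [MeasurableSpace X] {μ : Measure X} {k : X → X → ℝ≥0∞}

/-- The interaction energy `∫_A ∫_B k(x, y) dμ(y) dμ(x)` of two sets for a kernel `k`. -/
noncomputable def interaction (μ : Measure X) (k : X → X → ℝ≥0∞) (A B : Set X) : ℝ≥0∞ :=
  ∫⁻ x in A, ∫⁻ y in B, k x y ∂μ ∂μ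

/-- Variational subsolutions in `Ω` for the interaction energy of a kernel `k`: removing from `E`
a subset of `Ω` does not decrease the energy needed to separate `E` from its complement. -/
def IsSubsolution (μ : Measure X) (k : X → X → ℝ≥0∞) (Ω E : Set X) : Prop :=
  ∀ A, MeasurableSet A → A ⊆ E ∩ Ω → interaction μ k A Eᶜ ≤ interaction μ k A (E \ A)

lemma interaction_union_le [SFinite μ] (hk : Measurable k.uncurry) (A B C : Set X) :
    interaction μ k A (B ∪ C) ≤ interaction μ k A B + interaction μ k A C := by
  have hB : Measurable fun x ↦ ∫⁻ y in B, k x y ∂μ := hk.lintegral_prod_right'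
  unfold interaction
  rw [← lintegral_add_left hB]
  exact lintegral_mono fun x ↦ lintegral_union_le _ _ _

lemma IsSubsolution.interaction_compl_le [SFinite μ] {Ω E A : Set X} (hE : IsSubsolution μ k Ω E)
    (hk : Measurable k.uncurry) (hA : MeasurableSet A) (hAE : A ⊆ E ∩ Ω) :
    interaction μ k A Aᶜ ≤ 2 * interaction μ k A (E \ A) := by
  have hcompl : Aᶜ = Eᶜ ∪ E \ A := by
    rw [sdiff_eq, union_inter_distrib_left, compl_union_self, univ_inter,
      union_eq_self_of_subset_left (compl_subset_compl.2 (hAE.trans inter_subset_left))]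
  calc interaction μ k A Aᶜ
      = interaction μ k A (Eᶜ ∪ E \ A) := by rw [hcompl]
    _ ≤ interaction μ k A Eᶜ + interaction μ k A (E \ A) := interaction_union_le hk _ _ _
    _ ≤ 2 * interaction μ k A (E \ A) := by
        rw [two_mul]
        gcongr
        exact hE A hA hAE

end Interaction

lemma setLIntegral_indicator_Ioc_dist_le {X : Type*} [PseudoMetricSpace X] (c : ℝ≥0∞) (x p y : X)
    (τ t : ℝ) :
    ∫⁻ ρ in Ioo τ t, (Ioc (dist p x) (dist y x)).indicator (fun _ ↦ c) ρ ≤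
      c * min (ENNReal.ofReal (t - τ)) (edist p y) := by
  rw [lintegral_indicator measurableSet_Ioc, setLIntegral_const,
    Measure.restrict_apply measurableSet_Ioc]
  gcongr
  refine le_min ((measure_mono inter_subset_right).trans Real.volume_Ioo.le)
    ((measure_mono inter_subset_left).trans ?_)
  rw [Real.volume_Ioc, edist_dist, dist_comm p y]
  exact ENNReal.ofReal_le_ofReal (sub_le_iff_le_add.2 (dist_triangle y p x))

section Balls

variable {X : Type*} [PseudoMetricSpace X] [MeasurableSpace X] [OpensMeasurableSpace X]
  {μ : Measure X} {k : X → X → ℝ≥0∞}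

lemma measurable_indicator_Ioc_dist (hk : Measurable k.uncurry) (x : X) :
    Measurable fun q : ℝ × X × X ↦
      (Ioc (dist q.2.1 x) (dist q.2.2 x)).indicator (fun _ ↦ k q.2.1 q.2.2) q.1 := by
  have hdist : Measurable fun y ↦ dist y x := (continuous_id.dist continuous_const).measurable
  have hS : MeasurableSet {q : ℝ × X × X | dist q.2.1 x < q.1 ∧ q.1 ≤ dist q.2.2 x} :=
    (measurableSet_lt (hdist.comp measurable_snd.fst) measurable_fst).inter
      (measurableSet_le measurable_fst (hdist.comp measurable_snd.snd))
  exact (hk.comp measurable_snd).indicator hS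

lemma interaction_inter_ball_le {E : Set X} (hE : MeasurableSet E) (x : X) {ρ t : ℝ}
    (hρt : ρ ≤ t) :
    interaction μ k (E ∩ ball x ρ) (E \ (E ∩ ball x ρ)) ≤
      ∫⁻ p in E ∩ ball x t,
        ∫⁻ y, (Ioc (dist p x) (dist y x)).indicator (fun _ ↦ k p y) ρ ∂μ ∂μ := by
  have hm : MeasurableSet (E ∩ ball x ρ) := hE.inter measurableSet_ball
  refine (setLIntegral_mono' hm fun p hp ↦ ?_).trans
    (lintegral_mono_set (inter_subset_inter_right _ (ball_subset_ball hρt)))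
  rw [← lintegral_indicator (hE.diff hm)]
  refine lintegral_mono fun y ↦ indicator_le (g := fun y ↦ (Ioc (dist p x) (dist y x)).indicator
    (fun _ ↦ k p y) ρ) (fun y hy ↦ ?_) y
  have hy' : ρ ≤ dist y x := not_lt.1 fun h ↦ hy.2 ⟨hy.1, h⟩
  rw [indicator_of_mem (show ρ ∈ Ioc (dist p x) (dist y x) from ⟨hp.2, hy'⟩)]

/-- A pair `(p, y)` contributes to the left-hand side only for radii between `dist p x` and
`dist y x`, a set of length at most `dist p y`: averaging gains one order of integrability. -/
lemma setLIntegral_interaction_inter_ball_le [SFinite μ] (hk : Measurable k.uncurry) {E : Set X}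
    (hE : MeasurableSet E) (x : X) (τ t : ℝ) :
    ∫⁻ ρ in Ioo τ t, interaction μ k (E ∩ ball x ρ) (E \ (E ∩ ball x ρ)) ≤
      ∫⁻ p in E ∩ ball x t, ∫⁻ y, k p y * min (ENNReal.ofReal (t - τ)) (edist p y) ∂μ ∂μ := by
  set g : ℝ → X → X → ℝ≥0∞ := fun ρ p y ↦
    (Ioc (dist p x) (dist y x)).indicator (fun _ ↦ k p y) ρ
  have hg : Measurable fun q : ℝ × X × X ↦ g q.1 q.2.1 q.2.2 := measurable_indicator_Ioc_dist hk x
  have hg_assoc : Measurable fun q : (ℝ × X) × X ↦ g q.1.1 q.1.2 q.2 :=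
    hg.comp MeasurableEquiv.prodAssoc.measurable
  calc ∫⁻ ρ in Ioo τ t, interaction μ k (E ∩ ball x ρ) (E \ (E ∩ ball x ρ))
      ≤ ∫⁻ ρ in Ioo τ t, ∫⁻ p in E ∩ ball x t, ∫⁻ y, g ρ p y ∂μ ∂μ :=
        setLIntegral_mono' measurableSet_Ioo fun ρ hρ ↦ interaction_inter_ball_le hE x hρ.2.le
    _ = ∫⁻ p in E ∩ ball x t, (∫⁻ ρ in Ioo τ t, ∫⁻ y, g ρ p y ∂μ) ∂μ :=
        lintegral_lintegral_swap hg_assoc.lintegral_prod_right'.aemeasurable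
    _ = ∫⁻ p in E ∩ ball x t, ∫⁻ y, (∫⁻ ρ in Ioo τ t, g ρ p y) ∂μ ∂μ :=
        lintegral_congr fun p ↦ lintegral_lintegral_swap (f := fun ρ y ↦ g ρ p y) <|
          (hg.comp (measurable_fst.prodMk (measurable_const.prodMk measurable_snd))).aemeasurable
    _ ≤ ∫⁻ p in E ∩ ball x t, ∫⁻ y, k p y * min (ENNReal.ofReal (t - τ)) (edist p y) ∂μ ∂μ :=
        lintegral_mono fun p ↦ lintegral_mono fun y ↦
          setLIntegral_indicator_Ioc_dist_le (k p y) x p y τ t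

end Balls

section RadialIntegral

variable {s δ : ℝ}

lemma eqOn_rpow_mul_min_Ioc :
    EqOn (fun y ↦ y ^ (-s)) (fun y ↦ y ^ (-1 - s) * min δ y) (Ioc 0 δ) := by
  intro y ⟨hy, hyδ⟩
  simp only [min_eq_right hyδ, ← Real.rpow_add_one hy.ne']
  ring_nf

lemma eqOn_rpow_mul_min_Ioi :
    EqOn (fun y ↦ δ * y ^ (-1 - s)) (fun y ↦ y ^ (-1 - s) * min δ y) (Ioi δ) := by
  intro y hy
  simp only [min_eq_left (mem_Ioi.1 hy).le, mul_comm]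

lemma integrableOn_Ioc_rpow_mul_min (hs : s < 1) (hδ : 0 < δ) :
    IntegrableOn (fun y ↦ y ^ (-1 - s) * min δ y) (Ioc 0 δ) :=
  ((intervalIntegrable_iff_integrableOn_Ioc_of_le hδ.le).1
    (intervalIntegral.intervalIntegrable_rpow' (by linarith))).congr_fun
    eqOn_rpow_mul_min_Ioc measurableSet_Ioc

lemma integrableOn_Ioi_rpow_mul_min (hs : 0 < s) (hδ : 0 < δ) :
    IntegrableOn (fun y ↦ y ^ (-1 - s) * min δ y) (Ioi δ) :=
  IntegrableOn.congr_fun ((integrableOn_Ioi_rpow_of_lt (by linarith) hδ).const_mul δ)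
    eqOn_rpow_mul_min_Ioi measurableSet_Ioi

lemma integrableOn_Ioi_zero_rpow_mul_min (hs : s ∈ Ioo 0 1) (hδ : 0 < δ) :
    IntegrableOn (fun y ↦ y ^ (-1 - s) * min δ y) (Ioi 0) := by
  rw [← Ioc_union_Ioi_eq_Ioi hδ.le]
  exact (integrableOn_Ioc_rpow_mul_min hs.2 hδ).union (integrableOn_Ioi_rpow_mul_min hs.1 hδ)

lemma integral_Ioi_zero_rpow_mul_min (hs : s ∈ Ioo 0 1) (hδ : 0 < δ) :
    ∫ y in Ioi 0, y ^ (-1 - s) * min δ y = δ ^ (1 - s) / (s * (1 - s)) := by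
  obtain ⟨hs0, hs1⟩ := hs
  have hs1' : 1 - s ≠ 0 := by linarith
  have inner : ∫ y in Ioc 0 δ, y ^ (-1 - s) * min δ y = δ ^ (1 - s) / (1 - s) := by
    rw [← setIntegral_congr_fun measurableSet_Ioc eqOn_rpow_mul_min_Ioc,
      ← intervalIntegral.integral_of_le hδ.le, integral_rpow (Or.inl (by linarith)),
      neg_add_eq_sub, Real.zero_rpow hs1', sub_zero]
  have outer : ∫ y in Ioi δ, y ^ (-1 - s) * min δ y = δ ^ (1 - s) / s := by
    rw [← setIntegral_congr_fun measurableSet_Ioi eqOn_rpow_mul_min_Ioi, integral_const_mul,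
      integral_Ioi_rpow_of_lt (by linarith) hδ, show -1 - s + 1 = -s by ring, neg_div_neg_eq,
      mul_div_assoc', mul_comm, ← Real.rpow_add_one hδ.ne', neg_add_eq_sub]
  rw [← Ioc_union_Ioi_eq_Ioi hδ.le, setIntegral_union (Ioc_disjoint_Ioi le_rfl) measurableSet_Ioi
    (integrableOn_Ioc_rpow_mul_min hs1 hδ) (integrableOn_Ioi_rpow_mul_min hs0 hδ), inner, outer]
  field_simp
  ring

end RadialIntegral

/-- The kernel `|x - y|^{-α}`; it vanishes on the diagonal when `α ≠ 0`. -/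
noncomputable def powerKernel {V : Type*} [NormedAddCommGroup V] (α : ℝ) (x y : V) : ℝ≥0∞ :=
  ENNReal.ofReal (1 / ‖x - y‖ ^ α)

lemma measurable_powerKernel {V : Type*} [NormedAddCommGroup V] [SecondCountableTopology V]
    [MeasurableSpace V] [OpensMeasurableSpace V] (α : ℝ) :
    Measurable (powerKernel (V := V) α).uncurry := by
  have hnorm : Measurable fun q : V × V ↦ ‖q.1 - q.2‖ :=
    (continuous_fst.sub continuous_snd).norm.measurable
  exact (measurable_const.div (hnorm.pow_const α)).ennreal_ofReal

section PowerKernel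

variable {V : Type*} [NormedAddCommGroup V] [NormedSpace ℝ V] [FiniteDimensional ℝ V]
  [Nontrivial V] [MeasurableSpace V] [BorelSpace V] (μ : Measure V) [μ.IsAddHaarMeasure]

lemma lintegral_powerKernel_mul_min {s δ : ℝ} (hs : s ∈ Ioo 0 1) (hδ : 0 < δ) (p : V) :
    ∫⁻ y, powerKernel (finrank ℝ V + s) p y * min (ENNReal.ofReal δ) (edist p y) ∂μ =
      ENNReal.ofReal (finrank ℝ V * μ.real (ball 0 1) * (δ ^ (1 - s) / (s * (1 - s)))) := by
  set d := finrank ℝ V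
  set f : ℝ → ℝ := fun ρ ↦ 1 / ρ ^ (d + s) * min δ ρ
  have hf : EqOn (fun ρ ↦ ρ ^ (-1 - s) * min δ ρ) (fun ρ ↦ ρ ^ (d - 1) • f ρ) (Ioi 0) := by
    intro ρ (hρ : 0 < ρ)
    have hd : ((d - 1 : ℕ) : ℝ) = d - 1 := by
      rw [Nat.cast_sub (Module.finrank_pos (R := ℝ) (M := V)), Nat.cast_one]
    simp only [f, smul_eq_mul, ← mul_assoc]
    rw [← Real.rpow_natCast, one_div, ← Real.rpow_neg hρ.le, ← Real.rpow_add hρ, hd]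
    ring_nf
  have hint : Integrable (fun z ↦ f ‖z‖) μ := (integrable_fun_norm_addHaar μ).2 <|
    (integrableOn_Ioi_zero_rpow_mul_min hs hδ).congr_fun hf measurableSet_Ioi
  have hval : ∫ z, f ‖z‖ ∂μ = d * μ.real (ball 0 1) * (δ ^ (1 - s) / (s * (1 - s))) := by
    rw [integral_fun_norm_addHaar, ← setIntegral_congr_fun measurableSet_Ioi hf,
      integral_Ioi_zero_rpow_mul_min hs hδ, nsmul_eq_mul, smul_eq_mul, mul_assoc]
  calc ∫⁻ y, powerKernel (d + s) p y * min (ENNReal.ofReal δ) (edist p y) ∂μ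
      = ∫⁻ y, ENNReal.ofReal (f ‖p - y‖) ∂μ := by
        refine lintegral_congr fun y ↦ ?_
        rw [powerKernel, edist_dist, dist_eq_norm, ← ENNReal.ofReal_min,
          ← ENNReal.ofReal_mul (by positivity)]
    _ = ∫⁻ z, ENNReal.ofReal (f ‖z‖) ∂μ :=
        lintegral_sub_left_eq_self (fun z ↦ ENNReal.ofReal (f ‖z‖)) p
    _ = _ := by
        rw [← hval, ofReal_integral_eq_lintegral_ofReal hint
          (Eventually.of_forall fun z ↦ by simp only [Pi.zero_apply, f]; positivity)]

lemma measure_ball_le_measure_ball_two_mul_diff {A : Set V} {w : ℝ}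
    (hA : μ A ≤ μ (ball 0 w)) (p : V) : μ (ball 0 w) ≤ μ (ball p (2 * w) \ A) := by
  refine le_trans (ENNReal.le_sub_of_add_le_right (hA.trans_lt measure_ball_lt_top).ne ?_)
    le_measure_sdiff
  have h2 : (2 : ℝ≥0∞) ≤ ENNReal.ofReal (2 ^ finrank ℝ V) := by
    rw [← ENNReal.ofReal_ofNat]
    exact ENNReal.ofReal_le_ofReal
      (le_self_pow₀ one_le_two (Module.finrank_pos (R := ℝ) (M := V)).ne')
  calc μ (ball 0 w) + μ A ≤ 2 * μ (ball 0 w) := by rw [two_mul]; gcongr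
    _ ≤ ENNReal.ofReal (2 ^ finrank ℝ V) * μ (ball 0 w) := by gcongr
    _ = μ (ball p (2 * w)) := (Measure.addHaar_ball_mul μ p two_pos.le w).symm

lemma le_interaction_powerKernel_compl {α : ℝ} (hα : 0 ≤ α) {A : Set V} (hA : MeasurableSet A)
    {w : ℝ} (hAw : μ A ≤ μ (ball 0 w)) :
    ENNReal.ofReal (1 / (2 * w) ^ α) * μ A ^ 2 ≤ interaction μ (powerKernel α) A Aᶜ := by
  have hpoint (p : V) : ENNReal.ofReal (1 / (2 * w) ^ α) * μ A ≤
      ∫⁻ y in Aᶜ, powerKernel α p y ∂μ :=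
    calc ENNReal.ofReal (1 / (2 * w) ^ α) * μ A
        ≤ ENNReal.ofReal (1 / (2 * w) ^ α) * μ (ball p (2 * w) \ A) := by
          refine mul_le_mul_right ?_ _
          exact hAw.trans (measure_ball_le_measure_ball_two_mul_diff μ hAw p)
      _ = ∫⁻ _ in ball p (2 * w) \ A, ENNReal.ofReal (1 / (2 * w) ^ α) ∂μ := by
          rw [setLIntegral_const]
      _ ≤ ∫⁻ y in ball p (2 * w) \ A, powerKernel α p y ∂μ := by
          refine setLIntegral_mono_ae' (measurableSet_ball.diff hA) ?_
          filter_upwards [Measure.ae_ne μ p] with y hyp hy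
          have hpos : 0 < ‖p - y‖ := norm_sub_pos_iff.2 hyp.symm
          have hle : ‖p - y‖ ≤ 2 * w := (dist_eq_norm p y ▸ mem_ball'.1 hy.1).le
          unfold powerKernel
          gcongr
      _ ≤ ∫⁻ y in Aᶜ, powerKernel α p y ∂μ := lintegral_mono_set fun y hy ↦ hy.2
  calc ENNReal.ofReal (1 / (2 * w) ^ α) * μ A ^ 2
      = ∫⁻ _ in A, ENNReal.ofReal (1 / (2 * w) ^ α) * μ A ∂μ := by
        rw [setLIntegral_const, sq, mul_assoc]
    _ ≤ interaction μ (powerKernel α) A Aᶜ := lintegral_mono hpoint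

end PowerKernel

section VolumeRadius

variable {V : Type*} [NormedAddCommGroup V] [NormedSpace ℝ V] [MeasurableSpace V]
  {μ : Measure V} {A B : Set V}

/-- The radius of a ball with the same measure as `A` (see `measure_ball_volumeRadius`), for `A` of
finite measure. -/
noncomputable def volumeRadius (μ : Measure V) (A : Set V) : ℝ :=
  (μ.real A / μ.real (ball 0 1)) ^ (finrank ℝ V : ℝ)⁻¹

lemma volumeRadius_nonneg : 0 ≤ volumeRadius μ A := by
  unfold volumeRadius
  positivity

lemma volumeRadius_mono (hAB : A ⊆ B) (hB : μ B ≠ ∞) : volumeRadius μ A ≤ volumeRadius μ B := by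
  have := measureReal_mono hAB hB
  unfold volumeRadius
  gcongr

variable [FiniteDimensional ℝ V] [μ.IsAddHaarMeasure]

variable (μ) in
lemma measureReal_ball_zero_one_pos : 0 < μ.real (ball 0 1) :=
  ENNReal.toReal_pos (measure_ball_pos μ 0 one_pos).ne' measure_ball_ne_top

lemma volumeRadius_pos (hA₀ : μ A ≠ 0) (hA : μ A ≠ ∞) : 0 < volumeRadius μ A :=
  Real.rpow_pos_of_pos
    (div_pos (ENNReal.toReal_pos hA₀ hA) (measureReal_ball_zero_one_pos μ)) _

variable [Nontrivial V]

variable (μ) in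
lemma volumeRadius_pow_mul (A : Set V) :
    volumeRadius μ A ^ finrank ℝ V * μ.real (ball 0 1) = μ.real A := by
  rw [volumeRadius, Real.rpow_inv_natCast_pow (by positivity) Module.finrank_pos.ne',
    div_mul_cancel₀ _ (measureReal_ball_zero_one_pos μ).ne']

lemma measure_ball_volumeRadius [BorelSpace V] (hA : μ A ≠ ∞) (x : V) :
    μ (ball x (volumeRadius μ A)) = μ A := by
  rw [Measure.addHaar_ball μ x volumeRadius_nonneg, ← ofReal_measureReal hA,
    ← volumeRadius_pow_mul μ A, ENNReal.ofReal_mul (pow_nonneg volumeRadius_nonneg _),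
    ofReal_measureReal measure_ball_ne_top]

end VolumeRadius

section Decay

variable {V : Type*} [NormedAddCommGroup V] [NormedSpace ℝ V] [FiniteDimensional ℝ V]
  [Nontrivial V] [MeasurableSpace V] [BorelSpace V] {μ : Measure V} [μ.IsAddHaarMeasure]
  {s : ℝ} {Ω E : Set V}

lemma IsSubsolution.measure_inter_ball_sq_le_interaction {α : ℝ}
    (hsub : IsSubsolution μ (powerKernel α) Ω E) (hα : 0 ≤ α) (hE : MeasurableSet E) {x : V}
    {ρ w : ℝ} (hΩ : ball x ρ ∩ E ⊆ Ω) (hρw : μ (E ∩ ball x ρ) ≤ μ (ball 0 w)) :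
    ENNReal.ofReal (1 / (2 * w) ^ α) * μ (E ∩ ball x ρ) ^ 2 ≤
      2 * interaction μ (powerKernel α) (E ∩ ball x ρ) (E \ (E ∩ ball x ρ)) := by
  have hm : MeasurableSet (E ∩ ball x ρ) := hE.inter measurableSet_ball
  exact (le_interaction_powerKernel_compl μ hα hm hρw).trans
    (hsub.interaction_compl_le (measurable_powerKernel α) hm fun y hy ↦ ⟨hy.1, hΩ hy.symm⟩)

lemma IsSubsolution.measure_inter_ball_sq_le
    (hsub : IsSubsolution μ (powerKernel (finrank ℝ V + s)) Ω E) (hs : s ∈ Ioo 0 1)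
    (hE : MeasurableSet E) {x : V} {τ t w : ℝ} (hτt : τ < t) (hΩ : ball x t ∩ E ⊆ Ω)
    (htw : μ (E ∩ ball x t) ≤ μ (ball 0 w)) :
    ENNReal.ofReal (t - τ) *
        (ENNReal.ofReal (1 / (2 * w) ^ (finrank ℝ V + s)) * μ (E ∩ ball x τ) ^ 2) ≤
      2 * (ENNReal.ofReal
        (finrank ℝ V * μ.real (ball 0 1) * ((t - τ) ^ (1 - s) / (s * (1 - s)))) *
          μ (E ∩ ball x t)) := by
  set k := powerKernel (V := V) (finrank ℝ V + s)
  have hα : 0 ≤ finrank ℝ V + s := add_nonneg (Nat.cast_nonneg _) hs.1.le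
  have lower : ∀ ρ ∈ Ioo τ t,
      ENNReal.ofReal (1 / (2 * w) ^ (finrank ℝ V + s)) * μ (E ∩ ball x τ) ^ 2 ≤
        2 * interaction μ k (E ∩ ball x ρ) (E \ (E ∩ ball x ρ)) := by
    intro ρ ⟨hτρ, hρt⟩
    have hball : ball x ρ ⊆ ball x t := ball_subset_ball hρt.le
    refine le_trans (by gcongr) (hsub.measure_inter_ball_sq_le_interaction hα hE
      ((inter_subset_inter_left _ hball).trans hΩ) (le_trans (by gcongr) htw))
  calc ENNReal.ofReal (t - τ) *
        (ENNReal.ofReal (1 / (2 * w) ^ (finrank ℝ V + s)) * μ (E ∩ ball x τ) ^ 2)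
      = ∫⁻ _ in Ioo τ t,
          ENNReal.ofReal (1 / (2 * w) ^ (finrank ℝ V + s)) * μ (E ∩ ball x τ) ^ 2 := by
        rw [setLIntegral_const, Real.volume_Ioo, mul_comm]
    _ ≤ ∫⁻ ρ in Ioo τ t, 2 * interaction μ k (E ∩ ball x ρ) (E \ (E ∩ ball x ρ)) :=
        setLIntegral_mono' measurableSet_Ioo lower
    _ = 2 * ∫⁻ ρ in Ioo τ t, interaction μ k (E ∩ ball x ρ) (E \ (E ∩ ball x ρ)) :=
        lintegral_const_mul' _ _ ENNReal.ofNat_ne_top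
    _ ≤ 2 * ∫⁻ p in E ∩ ball x t,
          ∫⁻ y, k p y * min (ENNReal.ofReal (t - τ)) (edist p y) ∂μ ∂μ := by
        gcongr
        exact setLIntegral_interaction_inter_ball_le (measurable_powerKernel _) hE x τ t
    _ = _ := by
        simp only [k, lintegral_powerKernel_mul_min μ hs (sub_pos.2 hτt), setLIntegral_const]

lemma IsSubsolution.measureReal_inter_ball_sq_le
    (hsub : IsSubsolution μ (powerKernel (finrank ℝ V + s)) Ω E) (hs : s ∈ Ioo 0 1)
    (hE : MeasurableSet E) {x : V} {τ t w : ℝ} (hτt : τ < t) (hΩ : ball x t ∩ E ⊆ Ω) (hw : 0 < w)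
    (htw : μ (E ∩ ball x t) ≤ μ (ball 0 w)) :
    (t - τ) ^ s * μ.real (E ∩ ball x τ) ^ 2 ≤
      2 * finrank ℝ V / (s * (1 - s)) * (2 * w) ^ (finrank ℝ V + s) * μ.real (ball 0 1) *
        μ.real (E ∩ ball x t) := by
  have hδ : 0 < t - τ := sub_pos.2 hτt
  have hs0 : 0 < s := hs.1
  have hs1 : 0 < 1 - s := sub_pos.2 hs.2
  have hfin : μ (E ∩ ball x t) ≠ ∞ := measure_inter_ne_top_of_right_ne_top measure_ball_ne_top
  have hsplit : t - τ = (t - τ) ^ s * (t - τ) ^ (1 - s) := by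
    rw [← Real.rpow_add hδ, add_sub_cancel, Real.rpow_one]
  have henergy := ENNReal.toReal_mono (by finiteness)
    (hsub.measure_inter_ball_sq_le hs hE hτt hΩ htw)
  simp only [ENNReal.toReal_mul, ENNReal.toReal_pow, ENNReal.toReal_ofNat, ← measureReal_def]
    at henergy
  rw [ENNReal.toReal_ofReal (by positivity), ENNReal.toReal_ofReal (by positivity),
    ENNReal.toReal_ofReal (by positivity)] at henergy
  have hfactor : 0 < (t - τ) ^ (1 - s) / (2 * w) ^ (finrank ℝ V + s) := by positivity
  refine le_of_mul_le_mul_left ?_ hfactor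
  calc (t - τ) ^ (1 - s) / (2 * w) ^ (finrank ℝ V + s) *
        ((t - τ) ^ s * μ.real (E ∩ ball x τ) ^ 2)
      = ((t - τ) ^ s * (t - τ) ^ (1 - s)) *
          (1 / (2 * w) ^ (finrank ℝ V + s) * μ.real (E ∩ ball x τ) ^ 2) := by ring
    _ = (t - τ) * (1 / (2 * w) ^ (finrank ℝ V + s) * μ.real (E ∩ ball x τ) ^ 2) := by
        rw [← hsplit]
    _ ≤ 2 * (finrank ℝ V * μ.real (ball 0 1) * ((t - τ) ^ (1 - s) / (s * (1 - s))) *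
          μ.real (E ∩ ball x t)) := henergy
    _ = _ := by field_simp

/-- A constant `K`, depending only on the dimension and `s`, such that passing from radius `t` to
`t - K * w`, with `w` the volume radius of `E ∩ ball x t`, halves the volume radius
(see `IsSubsolution.volumeRadius_inter_ball_sub_le`). -/
noncomputable def halvingConstant (d : ℕ) (s : ℝ) : ℝ :=
  (2 * d / (s * (1 - s)) * 2 ^ (d + s) * 4 ^ d) ^ s⁻¹

lemma halvingConstant_pos {d : ℕ} (hd : 0 < d) (hs : s ∈ Ioo 0 1) : 0 < halvingConstant d s := by
  have hs0 : 0 < s := hs.1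
  have hs1 : 0 < 1 - s := sub_pos.2 hs.2
  unfold halvingConstant
  positivity

lemma halvingConstant_rpow (d : ℕ) (hs : s ∈ Ioo 0 1) :
    halvingConstant d s ^ s = 2 * d / (s * (1 - s)) * 2 ^ (d + s) * 4 ^ d := by
  have hs0 : 0 < s := hs.1
  have hs1 : 0 < 1 - s := sub_pos.2 hs.2
  exact Real.rpow_inv_rpow (by positivity) hs0.ne'

lemma IsSubsolution.volumeRadius_inter_ball_sub_le
    (hsub : IsSubsolution μ (powerKernel (finrank ℝ V + s)) Ω E) (hs : s ∈ Ioo 0 1)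
    (hE : MeasurableSet E) {x : V} {t : ℝ} (hΩ : ball x t ∩ E ⊆ Ω) (ht : μ (E ∩ ball x t) ≠ 0) :
    volumeRadius μ (E ∩ ball x (t - halvingConstant (finrank ℝ V) s *
      volumeRadius μ (E ∩ ball x t))) ≤ volumeRadius μ (E ∩ ball x t) / 2 := by
  set d := finrank ℝ V
  set w := volumeRadius μ (E ∩ ball x t)
  set τ := t - halvingConstant d s * w
  set ω := μ.real (ball (0 : V) 1)
  have ht' : μ (E ∩ ball x t) ≠ ∞ := measure_inter_ne_top_of_right_ne_top measure_ball_ne_top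
  have hw : 0 < w := volumeRadius_pos ht ht'
  have hω : 0 < ω := measureReal_ball_zero_one_pos μ
  have hK : 0 < halvingConstant d s := halvingConstant_pos Module.finrank_pos hs
  have hδ : (t - τ) ^ s = 2 * d / (s * (1 - s)) * 2 ^ (d + s) * 4 ^ d * w ^ s := by
    rw [sub_sub_cancel, Real.mul_rpow hK.le hw.le, halvingConstant_rpow d hs]
  have hmain := hsub.measureReal_inter_ball_sq_le hs hE
    (sub_lt_self t (mul_pos hK hw)) hΩ hw (measure_ball_volumeRadius ht' 0).ge
  rw [hδ, ← volumeRadius_pow_mul μ (E ∩ ball x τ), ← volumeRadius_pow_mul μ (E ∩ ball x t),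
    Real.mul_rpow two_pos.le hw.le, Real.rpow_add hw, Real.rpow_natCast] at hmain
  have hd : 0 < (d : ℝ) := Nat.cast_pos.2 Module.finrank_pos
  have hs0 : 0 < s := hs.1
  have hs1 : 0 < 1 - s := sub_pos.2 hs.2
  have hfactor : 0 < 2 * d / (s * (1 - s)) * 2 ^ (d + s) * w ^ s * ω ^ 2 := by positivity
  have hpow : (2 * volumeRadius μ (E ∩ ball x τ)) ^ (d * 2) ≤ w ^ (d * 2) := by
    refine le_of_mul_le_mul_left ?_ hfactor
    have h4 : (4 : ℝ) ^ d = 2 ^ (d * 2) := by rw [pow_mul', sq]; norm_num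
    rw [h4] at hmain
    refine (hmain.trans_eq' ?_).trans_eq ?_ <;> ring
  have hdouble : 2 * volumeRadius μ (E ∩ ball x τ) ≤ w :=
    le_of_pow_le_pow_left₀ (mul_ne_zero Module.finrank_pos.ne' two_ne_zero) hw.le hpow
  linarith

end Decay

lemma le_two_mul_of_halving {W : ℝ → ℝ} {K r : ℝ} (hK : 0 ≤ K) (hr : 0 < r) (hmono : Monotone W)
    (hpos : ∀ t, 0 < t → 0 < W t)
    (hhalf : ∀ t, 0 < t → t ≤ r → W (t - K * W t) ≤ W t / 2) : r ≤ 2 * K * W r := by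
  by_contra! hlt
  set a := r - 2 * K * W r
  have ha : 0 < a := sub_pos.2 hlt
  -- The potential `t - 2 * K * W t` does not decrease under `t ↦ t - K * W t`.
  have iterate (j : ℕ) : ∃ t, 0 < t ∧ t ≤ r ∧ a ≤ t - 2 * K * W t ∧ W t ≤ W r / 2 ^ j := by
    induction j with
    | zero => exact ⟨r, hr, le_rfl, le_rfl, by simp⟩
    | succ j ih =>
      obtain ⟨t, ht, htr, hat, hWt⟩ := ih
      have hKW : 0 ≤ K * W t := mul_nonneg hK (hpos t ht).le
      have hhalf_t := hhalf t ht htr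
      have hKhalf := mul_le_mul_of_nonneg_left hhalf_t hK
      refine ⟨t - K * W t, by linarith, by linarith, by linarith, ?_⟩
      rw [pow_succ, ← div_div]
      linarith
  have hWa (j : ℕ) : W a ≤ W r / 2 ^ j := by
    obtain ⟨t, ht, -, hat, hWt⟩ := iterate j
    have hKW : 0 ≤ K * W t := mul_nonneg hK (hpos t ht).le
    exact (hmono (by linarith)).trans hWt
  have hlim : Tendsto (fun j : ℕ ↦ W r / 2 ^ j) atTop (nhds 0) :=
    tendsto_const_nhds.div_atTop (tendsto_pow_atTop_atTop_of_one_lt one_lt_two)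
  exact (hpos a ha).not_ge (ge_of_tendsto' hlim hWa)

theorem uniform_density_estimate_general {V : Type*} [NormedAddCommGroup V] [NormedSpace ℝ V]
    [FiniteDimensional ℝ V] [Nontrivial V] [MeasurableSpace V] [BorelSpace V] (μ : Measure V)
    [μ.IsAddHaarMeasure] {s : ℝ} (hs : s ∈ Ioo 0 1) :
    ∃ c : ℝ, 0 < c ∧ ∀ Ω E : Set V, MeasurableSet E →
      IsSubsolution μ (powerKernel (finrank ℝ V + s)) Ω E →
      ∀ x : V, ∀ r : ℝ, 0 < r → (∀ ρ : ℝ, 0 < ρ → 0 < μ (ball x ρ ∩ E)) → ball x r ∩ E ⊆ Ω →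
        ENNReal.ofReal (c * r ^ finrank ℝ V) ≤ μ (E ∩ ball x r) := by
  set K := halvingConstant (finrank ℝ V) s
  have hK : 0 < K := halvingConstant_pos Module.finrank_pos hs
  have hω := measureReal_ball_zero_one_pos μ
  refine ⟨μ.real (ball 0 1) / (2 * K) ^ finrank ℝ V, by positivity, ?_⟩
  intro Ω E hE hsub x r hr hx hΩ
  have hx' (t : ℝ) (ht : 0 < t) : μ (E ∩ ball x t) ≠ 0 := inter_comm E _ ▸ (hx t ht).ne'
  have hfin (t : ℝ) : μ (E ∩ ball x t) ≠ ∞ :=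
    measure_inter_ne_top_of_right_ne_top measure_ball_ne_top
  have hradius : r ≤ 2 * K * volumeRadius μ (E ∩ ball x r) := by
    refine le_two_mul_of_halving (W := fun t ↦ volumeRadius μ (E ∩ ball x t)) hK.le hr
      (fun _ t ht ↦ volumeRadius_mono (inter_subset_inter_right _ (ball_subset_ball ht)) (hfin t))
      (fun t ht ↦ volumeRadius_pos (hx' t ht) (hfin t)) fun t ht htr ↦ ?_
    exact hsub.volumeRadius_inter_ball_sub_le hs hE
      ((inter_subset_inter_left _ (ball_subset_ball htr)).trans hΩ) (hx' t ht)
  rw [← ofReal_measureReal (hfin r), ← volumeRadius_pow_mul μ (E ∩ ball x r)]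
  refine ENNReal.ofReal_le_ofReal ?_
  rw [div_mul_comm, ← div_pow]
  gcongr
  exact (div_le_iff₀' (by positivity)).2 hradius

/-- Uniform density estimate: there is `c > 0` depending only on `n, s` such that if `E` is a
variational subsolution in `Ω`, `x ∈ ∂E` (in the measure-theoretic sense: every ball around `x`
meets both `E` and `C E` in positive measure) and `B_r(x) ∩ E ⊆ Ω`, then
`|E ∩ B_r(x)| ≥ c rⁿ`. -/
theorem uniform_density_estimate (n : ℕ) (hn : 1 ≤ n) (s : ℝ) (hs : s ∈ Set.Ioo (0:ℝ) 1) :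
    ∃ c : ℝ, 0 < c ∧ ∀ Ω E : Set (EuclideanSpace ℝ (Fin n)), IsOpen Ω → MeasurableSet E →
      IsSubsolutionIn n s Ω E →
      ∀ x : EuclideanSpace ℝ (Fin n), ∀ r : ℝ, 0 < r →
        (∀ ρ : ℝ, 0 < ρ → 0 < volume (ball x ρ ∩ E) ∧ 0 < volume (ball x ρ \ E)) →
        ball x r ∩ E ⊆ Ω →
        ENNReal.ofReal (c * r ^ (n : ℕ)) ≤ volume (E ∩ ball x r) := by
  have : Nonempty (Fin n) := ⟨⟨0, hn⟩⟩
  obtain ⟨c, hc, h⟩ := uniform_density_estimate_general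
    (volume : Measure (EuclideanSpace ℝ (Fin n))) hs
  rw [finrank_euclideanSpace_fin] at h
  exact ⟨c, hc, fun Ω E _ hE hsub x r hr hx ↦
    h Ω E hE hsub x r hr fun ρ hρ ↦ (hx ρ hρ).1⟩
end

section
/- Suppose E_k are minimizers for J_{B₁} and χ_{E_k} → χ_E in L^1_loc(R^n). Then E is a minimizer for J_{B₁} and J_{B₁}(E_k) → J_{B₁}(E). -/
open MeasureTheory Metric Filter Set

/-- `J_Ω(E) = L(E ∩ Ω, C E) + L(E \ Ω, C E ∩ Ω)`. -/
noncomputable def Jfun (n : ℕ) (s : ℝ) (Ω E : Set (EuclideanSpace ℝ (Fin n))) : ENNReal :=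
  interactionL n s (E ∩ Ω) Eᶜ + interactionL n s (E \ Ω) (Eᶜ ∩ Ω)

/-- `E` is a minimizer of `J` in the unit ball. -/
def IsMinimizerB1 (n : ℕ) (s : ℝ) (E : Set (EuclideanSpace ℝ (Fin n))) : Prop :=
  MeasurableSet E ∧ ∀ F : Set (EuclideanSpace ℝ (Fin n)), MeasurableSet F →
    F \ ball (0 : EuclideanSpace ℝ (Fin n)) 1 = E \ ball (0 : EuclideanSpace ℝ (Fin n)) 1 →
    Jfun n s (ball (0 : EuclideanSpace ℝ (Fin n)) 1) E ≤
      Jfun n s (ball (0 : EuclideanSpace ℝ (Fin n)) 1) F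

/-- `χ_{A_k} → χ_A` in `L¹_loc`. -/
def L1locIndicatorTendsto (n : ℕ) (A : ℕ → Set (EuclideanSpace ℝ (Fin n)))
    (Alim : Set (EuclideanSpace ℝ (Fin n))) : Prop :=
  ∀ K : Set (EuclideanSpace ℝ (Fin n)), IsCompact K →
    Tendsto (fun k => ∫ x in K,
      |Set.indicator (A k) (fun _ => (1:ℝ)) x - Set.indicator Alim (fun _ => (1:ℝ)) x|)
      atTop (nhds 0)

/-!
Write `J_Ω(E) = ν(S_E)`, where `ν` is the measure of pairwise interactions and `S_E` the set of
pairs in `E × Eᶜ` that do not both lie outside `Ω`. Along a subsequence `χ_{E_k} → χ_E` almost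
everywhere, so `ν`-almost every point of `S_E` eventually lies in `S_{E_k}`, and Fatou's lemma gives
`J_Ω(E) ≤ liminf J_Ω(E_k)`. Conversely, if `F = E` outside `Ω`, then `F` inside `Ω` continued by
`E_k` outside is a competitor for `E_k`. Its energy exceeds `J_Ω(F)` by at most the `ν`-mass of the
pairs separated by `∂Ω` that have an entry in `E_k ∆ E`. These masses tend to zero by dominated
convergence, because `L(Ω, Ωᶜ) < ∞`; hence `limsup J_Ω(E_k) ≤ J_Ω(F)`. The choices `F` arbitrary
and `F = E` give the two claims.

For the unit ball, `∫_{Bᶜ} |x - y|^{-(n+s)} dy ≤ C (1 - |x|)^{-s}` by scaling, and the right-hand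
side is integrable over `B` since `s < 1`.
-/

open scoped ENNReal Topology symmDiff

section NonlocalEnergy

variable {X : Type*}

/-- The pairs `(x, y) ∈ E × Eᶜ` that do not both lie outside `Ω`. For a measure `ν` of interactions
on `X × X`, `ν (crossingPairs Ω E)` is the abstract form of `J_Ω(E)`. -/
def crossingPairs (Ω E : Set X) : Set (X × X) :=
  (E ×ˢ Eᶜ) \ (Ωᶜ ×ˢ Ωᶜ)

/-- The pairs separated by the boundary of `Ω`, in either order: the interactions through which the
exterior data of a set influence its energy. -/
def straddlingPairs (Ω : Set X) : Set (X × X) :=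
  Ω ×ˢ Ωᶜ ∪ Ωᶜ ×ˢ Ω

/-- The pairs with at least one entry in `D`. For `D = A ∆ E` these are the only pairs that
`crossingPairs Ω A` and `crossingPairs Ω E` can classify differently. -/
def pairsMeeting (D : Set X) : Set (X × X) :=
  Prod.fst ⁻¹' D ∪ Prod.snd ⁻¹' D

lemma crossingPairs_eq_union (Ω E : Set X) :
    crossingPairs Ω E = (E ∩ Ω) ×ˢ Eᶜ ∪ (E \ Ω) ×ˢ (Eᶜ ∩ Ω) := by
  ext ⟨x, y⟩
  simp only [crossingPairs, mem_union, mem_prod, mem_inter_iff, Set.mem_sdiff, mem_compl_iff]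
  tauto

lemma crossingPairs_subset_union_pairsMeeting (Ω A E : Set X) :
    crossingPairs Ω E ⊆ crossingPairs Ω A ∪ pairsMeeting (A ∆ E) := by
  rintro ⟨x, y⟩
  simp only [crossingPairs, pairsMeeting, mem_union, mem_prod, Set.mem_sdiff, mem_compl_iff,
    mem_preimage, mem_symmDiff]
  tauto

-- A pair inside `Ω` sees only `F`; a pair separated by `∂Ω` also sees the exterior, where the
-- spliced set is `A` while `F` is `E`.
lemma crossingPairs_ite_subset {Ω A E F : Set X} (hFE : F \ Ω = E \ Ω) :
    crossingPairs Ω (Ω.ite F A) ⊆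
      crossingPairs Ω F ∪ straddlingPairs Ω ∩ pairsMeeting (A ∆ E) := by
  rintro ⟨x, y⟩
  have hx := Set.ext_iff.1 hFE x
  have hy := Set.ext_iff.1 hFE y
  simp only [crossingPairs, straddlingPairs, pairsMeeting, Set.ite, mem_union, mem_inter_iff,
    mem_prod, Set.mem_sdiff, mem_compl_iff, mem_preimage, mem_symmDiff] at hx hy ⊢
  by_cases hxΩ : x ∈ Ω <;> by_cases hyΩ : y ∈ Ω <;>
    simp only [hxΩ, hyΩ, and_true, and_false, true_and, false_and, or_true, or_false, false_or,
      not_true_eq_false, not_false_eq_true] at hx hy ⊢ <;> tauto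

variable [MeasurableSpace X] {μ : Measure X} {ν : Measure (X × X)} {Ω E F : Set X} {A : ℕ → Set X}

lemma measurableSet_straddlingPairs (hΩ : MeasurableSet Ω) : MeasurableSet (straddlingPairs Ω) :=
  (hΩ.prod hΩ.compl).union (hΩ.compl.prod hΩ)

lemma measurableSet_pairsMeeting (hE : MeasurableSet E) : MeasurableSet (pairsMeeting E) :=
  (measurable_fst hE).union (measurable_snd hE)

lemma measure_le_liminf_of_ae_eventually_mem {S : Set X} {T : ℕ → Set X}
    (h : ∀ᵐ x ∂μ, x ∈ S → ∀ᶠ k in atTop, x ∈ T k) : μ S ≤ liminf (fun k => μ (T k)) atTop := by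
  have hmono : Monotone fun N => ⋂ k ≥ N, T k := fun M N hMN =>
    biInter_mono (fun k (hk : N ≤ k) => hMN.trans hk) fun _ _ => Subset.rfl
  calc μ S ≤ μ (⋃ N, ⋂ k ≥ N, T k) := by
        refine measure_mono_ae ?_
        filter_upwards [h] with x hx hxS
        obtain ⟨N, hN⟩ := eventually_atTop.1 (hx hxS)
        exact mem_iUnion.2 ⟨N, mem_iInter₂.2 hN⟩
    _ = ⨆ N, μ (⋂ k ≥ N, T k) := hmono.measure_iUnion
    _ ≤ ⨆ N, ⨅ k ≥ N, μ (T k) :=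
        iSup_mono fun N => le_iInf₂ fun k hk => measure_mono (biInter_subset_of_mem hk)
    _ = liminf (fun k => μ (T k)) atTop := liminf_eq_iSup_iInf_of_nat.symm

lemma setIntegral_abs_indicator_sub_indicator (K : Set X) (hE : MeasurableSet E)
    (hF : MeasurableSet F) :
    ∫ x in K, |E.indicator (fun _ => (1 : ℝ)) x - F.indicator (fun _ => (1 : ℝ)) x| ∂μ =
      μ.real (E ∆ F ∩ K) := by
  have hind : (fun x => |E.indicator (fun _ => (1 : ℝ)) x - F.indicator (fun _ => (1 : ℝ)) x|) =
      (E ∆ F).indicator 1 := by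
    ext x
    rw [← apply_indicator_symmDiff abs_neg]
    simp [indicator, apply_ite abs]
  have hEF := hE.symmDiff hF
  rw [hind, integral_indicator_one hEF, measureReal_restrict_apply hEF]

lemma exists_subseq_ae_eventually_notMem [TopologicalSpace X] [SigmaCompactSpace X]
    {D : ℕ → Set X} (h : ∀ K, IsCompact K → Tendsto (fun k => μ (D k ∩ K)) atTop (𝓝 0)) :
    ∃ φ : ℕ → ℕ, ∀ᵐ x ∂μ, ∀ᶠ m in atTop, x ∉ D (φ m) := by
  have hsmall (m : ℕ) : ∃ k, μ (D k ∩ compactCovering X m) < 2⁻¹ ^ m :=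
    ((h _ (isCompact_compactCovering X m)).eventually_lt_const
      (ENNReal.pow_pos (ENNReal.inv_pos.2 ENNReal.ofNat_ne_top) m)).exists
  choose φ hφ using hsmall
  have hsum : ∑' m, μ (D (φ m) ∩ compactCovering X m) ≠ ∞ := by
    refine ne_top_of_le_ne_top ?_ (ENNReal.tsum_le_tsum fun m => (hφ m).le)
    simp [ENNReal.tsum_geometric]
  refine ⟨φ, ?_⟩
  filter_upwards [ae_eventually_notMem hsum] with x hx
  obtain ⟨N, hN⟩ := exists_mem_compactCovering x
  filter_upwards [hx, eventually_ge_atTop N] with m hm hNm hxD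
  exact hm ⟨hxD, compactCovering_subset X hNm hN⟩

lemma ae_eventually_notMem_pairsMeeting (hfst : Measure.QuasiMeasurePreserving Prod.fst ν μ)
    (hsnd : Measure.QuasiMeasurePreserving Prod.snd ν μ)
    {ι : Type*} {l : Filter ι} {D : ι → Set X}
    (h : ∀ᵐ x ∂μ, ∀ᶠ k in l, x ∉ D k) : ∀ᵐ p ∂ν, ∀ᶠ k in l, p ∉ pairsMeeting (D k) := by
  filter_upwards [hfst.ae h, hsnd.ae h] with p h₁ h₂
  filter_upwards [h₁, h₂] with k hk₁ hk₂
  exact not_or_intro hk₁ hk₂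

lemma measure_crossingPairs_le_liminf
    (h : ∀ᵐ p ∂ν, ∀ᶠ k in atTop, p ∉ pairsMeeting (A k ∆ E)) :
    ν (crossingPairs Ω E) ≤ liminf (fun k => ν (crossingPairs Ω (A k))) atTop := by
  refine measure_le_liminf_of_ae_eventually_mem ?_
  filter_upwards [h] with p hp hpE
  filter_upwards [hp] with k hk
  exact (crossingPairs_subset_union_pairsMeeting Ω (A k) E hpE).resolve_right hk

lemma tendsto_measure_inter_of_ae_eventually_notMem {ι : Type*} {l : Filter ι}
    [l.IsCountablyGenerated] {S : Set X} {T : ι → Set X} (hS : MeasurableSet S) (hfin : μ S ≠ ∞)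
    (hT : ∀ k, MeasurableSet (T k)) (h : ∀ᵐ x ∂μ, ∀ᶠ k in l, x ∉ T k) :
    Tendsto (fun k => μ (S ∩ T k)) l (𝓝 0) := by
  rw [← measure_empty (μ := μ)]
  refine tendsto_measure_of_ae_tendsto_indicator l .empty (fun k => hS.inter (hT k)) hS hfin
    (.of_forall fun _ => inter_subset_left) ?_
  filter_upwards [h] with x hx
  filter_upwards [hx] with k hk
  simp only [mem_inter_iff, hk, and_false, mem_empty_iff_false]

/-- `E` minimizes `F ↦ ν (crossingPairs Ω F)` among the measurable sets agreeing with `E` outside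
`Ω`: minimality for the nonlocal energy on `Ω` with interaction measure `ν`. -/
def IsNonlocalMinimizer (ν : Measure (X × X)) (Ω E : Set X) : Prop :=
  MeasurableSet E ∧ ∀ F, MeasurableSet F → F \ Ω = E \ Ω →
    ν (crossingPairs Ω E) ≤ ν (crossingPairs Ω F)

lemma IsNonlocalMinimizer.measure_crossingPairs_le {B : Set X} (hB : IsNonlocalMinimizer ν Ω B)
    (hΩ : MeasurableSet Ω) (hF : MeasurableSet F) (hFE : F \ Ω = E \ Ω) :
    ν (crossingPairs Ω B) ≤
      ν (crossingPairs Ω F) + ν (straddlingPairs Ω ∩ pairsMeeting (B ∆ E)) :=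
  calc ν (crossingPairs Ω B) ≤ ν (crossingPairs Ω (Ω.ite F B)) :=
        hB.2 _ (hΩ.ite hF hB.1) (ite_sdiff_self Ω F B)
    _ ≤ ν (crossingPairs Ω F ∪ straddlingPairs Ω ∩ pairsMeeting (B ∆ E)) :=
        measure_mono (crossingPairs_ite_subset hFE)
    _ ≤ _ := measure_union_le _ _

lemma limsup_measure_crossingPairs_le (hΩ : MeasurableSet Ω) (hfin : ν (straddlingPairs Ω) ≠ ∞)
    (hE : MeasurableSet E) (hA : ∀ k, IsNonlocalMinimizer ν Ω (A k))
    (h : ∀ᵐ p ∂ν, ∀ᶠ k in atTop, p ∉ pairsMeeting (A k ∆ E))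
    (hF : MeasurableSet F) (hFE : F \ Ω = E \ Ω) :
    limsup (fun k => ν (crossingPairs Ω (A k))) atTop ≤ ν (crossingPairs Ω F) := by
  have herror : Tendsto (fun k => ν (straddlingPairs Ω ∩ pairsMeeting (A k ∆ E))) atTop (𝓝 0) :=
    tendsto_measure_inter_of_ae_eventually_notMem (measurableSet_straddlingPairs hΩ) hfin
      (fun k => measurableSet_pairsMeeting ((hA k).1.symmDiff hE)) h
  calc limsup (fun k => ν (crossingPairs Ω (A k))) atTop
      ≤ limsup (fun k => ν (crossingPairs Ω F) +
          ν (straddlingPairs Ω ∩ pairsMeeting (A k ∆ E))) atTop :=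
        limsup_le_limsup (.of_forall fun k => (hA k).measure_crossingPairs_le hΩ hF hFE)
    _ = ν (crossingPairs Ω F) := by
        simpa only [add_zero] using (herror.const_add (ν (crossingPairs Ω F))).limsup_eq

theorem minimizers_compactness_general [TopologicalSpace X] [SigmaCompactSpace X]
    (hfst : Measure.QuasiMeasurePreserving Prod.fst ν μ)
    (hsnd : Measure.QuasiMeasurePreserving Prod.snd ν μ)
    (hΩ : MeasurableSet Ω) (hfin : ν (straddlingPairs Ω) ≠ ∞) (hE : MeasurableSet E)
    (hA : ∀ k, IsNonlocalMinimizer ν Ω (A k))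
    (hconv : ∀ K, IsCompact K → Tendsto (fun k => μ (A k ∆ E ∩ K)) atTop (𝓝 0)) :
    IsNonlocalMinimizer ν Ω E ∧
      Tendsto (fun k => ν (crossingPairs Ω (A k))) atTop (𝓝 (ν (crossingPairs Ω E))) := by
  have hsubseq (ψ : ℕ → ℕ) (hψ : Tendsto ψ atTop atTop) :
      ∃ φ : ℕ → ℕ, ∀ᵐ p ∂ν, ∀ᶠ m in atTop, p ∉ pairsMeeting (A (ψ (φ m)) ∆ E) := by
    obtain ⟨φ, hφ⟩ := exists_subseq_ae_eventually_notMem fun K hK => (hconv K hK).comp hψ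
    exact ⟨φ, ae_eventually_notMem_pairsMeeting hfst hsnd hφ⟩
  refine ⟨⟨hE, fun F hF hFE => ?_⟩, tendsto_of_subseq_tendsto fun ψ hψ => ?_⟩
  · obtain ⟨φ, hφ⟩ := hsubseq id tendsto_id
    calc ν (crossingPairs Ω E) ≤ liminf (fun m => ν (crossingPairs Ω (A (φ m)))) atTop :=
          measure_crossingPairs_le_liminf hφ
      _ ≤ limsup (fun m => ν (crossingPairs Ω (A (φ m)))) atTop := liminf_le_limsup
      _ ≤ ν (crossingPairs Ω F) :=
          limsup_measure_crossingPairs_le hΩ hfin hE (fun m => hA (φ m)) hφ hF hFE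
  · obtain ⟨φ, hφ⟩ := hsubseq ψ hψ
    exact ⟨φ, tendsto_of_le_liminf_of_limsup_le (measure_crossingPairs_le_liminf hφ)
      (limsup_measure_crossingPairs_le hΩ hfin hE (fun m => hA (ψ (φ m))) hφ hE rfl)⟩

end NonlocalEnergy

section RieszMeasure

variable {V : Type*} [NormedAddCommGroup V] [MeasurableSpace V]

/-- The measure on `V × V` with density `‖x - y‖ ^ (-p)` with respect to `μ.prod μ`, so that
`L(A, B)` is the mass of `A ×ˢ B` when `p = n + s`. -/
noncomputable def rieszMeasure (μ : Measure V) (p : ℝ) : Measure (V × V) :=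
  (μ.prod μ).withDensity fun z => ENNReal.ofReal (1 / ‖z.1 - z.2‖ ^ p)

lemma rieszMeasure_absolutelyContinuous (μ : Measure V) (p : ℝ) :
    rieszMeasure μ p ≪ μ.prod μ :=
  withDensity_absolutelyContinuous _ _

variable [BorelSpace V] [SecondCountableTopology V]

lemma rieszMeasure_prod (μ : Measure V) [SFinite μ] (p : ℝ) {A B : Set V}
    (hA : MeasurableSet A) (hB : MeasurableSet B) :
    rieszMeasure μ p (A ×ˢ B) =
      ∫⁻ x in A, ∫⁻ y in B, ENNReal.ofReal (1 / ‖x - y‖ ^ p) ∂μ ∂μ := by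
  rw [rieszMeasure, withDensity_apply _ (hA.prod hB), ← Measure.prod_restrict,
    lintegral_prod _ (by fun_prop)]

lemma rieszMeasure_prod_comm (μ : Measure V) [SFinite μ] (p : ℝ) {A B : Set V}
    (hA : MeasurableSet A) (hB : MeasurableSet B) :
    rieszMeasure μ p (A ×ˢ B) = rieszMeasure μ p (B ×ˢ A) := by
  rw [rieszMeasure_prod μ p hA hB, rieszMeasure_prod μ p hB hA,
    lintegral_lintegral_swap (by fun_prop)]
  exact lintegral_congr fun y => lintegral_congr fun x => by rw [norm_sub_rev]

end RieszMeasure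

section BallInteraction

variable {V : Type*} [NormedAddCommGroup V] [NormedSpace ℝ V] [FiniteDimensional ℝ V]
  [MeasurableSpace V] [BorelSpace V] (μ : Measure V) [μ.IsAddHaarMeasure]

lemma lintegral_compl_unitBall_norm_rpow_lt_top {p : ℝ} (hp : Module.finrank ℝ V < p) :
    ∫⁻ z in (ball (0 : V) 1)ᶜ, ENNReal.ofReal (1 / ‖z‖ ^ p) ∂μ < ∞ := by
  have hp0 : 0 ≤ p := (Nat.cast_nonneg _).trans hp.le
  have hbound : ∀ z ∈ (ball (0 : V) 1)ᶜ,
      ENNReal.ofReal (1 / ‖z‖ ^ p) ≤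
        ENNReal.ofReal (2 ^ p) * ENNReal.ofReal ((1 + ‖z‖) ^ (-p)) := by
    intro z hz
    have hz1 : 1 ≤ ‖z‖ := by simpa using hz
    rw [← ENNReal.ofReal_mul (by positivity)]
    refine ENNReal.ofReal_le_ofReal ?_
    calc 1 / ‖z‖ ^ p = 2 ^ p * (2 * ‖z‖) ^ (-p) := by
          rw [Real.mul_rpow two_pos.le (norm_nonneg z), Real.rpow_neg two_pos.le,
            Real.rpow_neg (norm_nonneg z), mul_inv_cancel_left₀ (by positivity), one_div]
      _ ≤ 2 ^ p * (1 + ‖z‖) ^ (-p) := by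
          gcongr 2 ^ p * ?_
          exact Real.rpow_le_rpow_of_nonpos (by positivity) (by linarith) (neg_nonpos.2 hp0)
  calc ∫⁻ z in (ball (0 : V) 1)ᶜ, ENNReal.ofReal (1 / ‖z‖ ^ p) ∂μ
      ≤ ∫⁻ z in (ball (0 : V) 1)ᶜ,
          ENNReal.ofReal (2 ^ p) * ENNReal.ofReal ((1 + ‖z‖) ^ (-p)) ∂μ :=
        setLIntegral_mono (by fun_prop) hbound
    _ ≤ ∫⁻ z, ENNReal.ofReal (2 ^ p) * ENNReal.ofReal ((1 + ‖z‖) ^ (-p)) ∂μ :=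
        setLIntegral_le_lintegral _ _
    _ = ENNReal.ofReal (2 ^ p) * ∫⁻ z, ENNReal.ofReal ((1 + ‖z‖) ^ (-p)) ∂μ :=
        lintegral_const_mul _ (by fun_prop)
    _ < ∞ := ENNReal.mul_lt_top ENNReal.ofReal_lt_top (finite_integral_one_add_norm hp)

lemma lintegral_compl_ball_norm_rpow {r : ℝ} (hr : 0 < r) (p : ℝ) :
    ∫⁻ z in (ball (0 : V) r)ᶜ, ENNReal.ofReal (1 / ‖z‖ ^ p) ∂μ =
      ENNReal.ofReal (r ^ (Module.finrank ℝ V - p)) *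
        ∫⁻ z in (ball (0 : V) 1)ᶜ, ENNReal.ofReal (1 / ‖z‖ ^ p) ∂μ := by
  have hμ : μ = ENNReal.ofReal (r ^ Module.finrank ℝ V) • μ.map (r • ·) := by
    rw [Measure.map_addHaar_smul μ hr.ne', smul_smul, ← ENNReal.ofReal_mul (by positivity),
      abs_of_pos (by positivity), mul_inv_cancel₀ (by positivity), ENNReal.ofReal_one, one_smul]
  have hpre : (r • ·) ⁻¹' (ball (0 : V) r)ᶜ = (ball (0 : V) 1)ᶜ := by
    ext z
    simp [norm_smul, abs_of_pos hr, hr]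
  have hscale (z : V) : ENNReal.ofReal (1 / ‖r • z‖ ^ p) =
      ENNReal.ofReal (r ^ (-p)) * ENNReal.ofReal (1 / ‖z‖ ^ p) := by
    rw [← ENNReal.ofReal_mul (by positivity), norm_smul, Real.norm_of_nonneg hr.le,
      Real.mul_rpow hr.le (norm_nonneg z), Real.rpow_neg hr.le, one_div, mul_inv, one_div]
  conv_lhs => rw [hμ]
  rw [Measure.restrict_smul, lintegral_smul_measure,
    setLIntegral_map measurableSet_ball.compl (by fun_prop) (by fun_prop), hpre]
  simp_rw [hscale]
  rw [lintegral_const_mul _ (by fun_prop), smul_eq_mul, ← mul_assoc,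
    ← ENNReal.ofReal_mul (by positivity), ← Real.rpow_natCast, ← Real.rpow_add hr, sub_eq_add_neg]

lemma lintegral_compl_ball_norm_sub_rpow_le {R : ℝ} (p : ℝ) {x : V} (hx : x ∈ ball (0 : V) R) :
    ∫⁻ y in (ball (0 : V) R)ᶜ, ENNReal.ofReal (1 / ‖x - y‖ ^ p) ∂μ ≤
      ENNReal.ofReal ((R - ‖x‖) ^ (Module.finrank ℝ V - p)) *
        ∫⁻ z in (ball (0 : V) 1)ᶜ, ENNReal.ofReal (1 / ‖z‖ ^ p) ∂μ := by
  have hr : 0 < R - ‖x‖ := sub_pos.2 (mem_ball_zero_iff.1 hx)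
  have hpre : (ball (0 : V) R)ᶜ ⊆ (x - ·) ⁻¹' (ball (0 : V) (R - ‖x‖))ᶜ := by
    intro y hy
    simp only [mem_compl_iff, mem_preimage, mem_ball_zero_iff, not_lt] at hy ⊢
    linarith [norm_le_norm_add_norm_sub' y x, norm_sub_rev x y]
  calc ∫⁻ y in (ball (0 : V) R)ᶜ, ENNReal.ofReal (1 / ‖x - y‖ ^ p) ∂μ
      ≤ ∫⁻ y in (x - ·) ⁻¹' (ball (0 : V) (R - ‖x‖))ᶜ, ENNReal.ofReal (1 / ‖x - y‖ ^ p) ∂μ :=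
        lintegral_mono_set hpre
    _ = ∫⁻ z in (ball (0 : V) (R - ‖x‖))ᶜ, ENNReal.ofReal (1 / ‖z‖ ^ p) ∂μ :=
        (Measure.measurePreserving_sub_left μ x).setLIntegral_comp_preimage
          (f := fun z => ENNReal.ofReal (1 / ‖z‖ ^ p)) measurableSet_ball.compl (by fun_prop)
    _ = _ := lintegral_compl_ball_norm_rpow μ hr p

lemma lintegral_ball_sub_norm_rpow_lt_top [Nontrivial V] (R : ℝ) {a : ℝ} (ha : -1 < a) :
    ∫⁻ x in ball (0 : V) R, ENNReal.ofReal ((R - ‖x‖) ^ a) ∂μ < ∞ := by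
  have hpow : IntervalIntegrable (fun t => (R - t) ^ a) volume 0 R := by
    have hpow₀ : IntervalIntegrable (fun t : ℝ => t ^ a) volume 0 R :=
      intervalIntegral.intervalIntegrable_rpow' ha
    simpa only [sub_zero, sub_self] using (hpow₀.comp_sub_left R).symm
  have hradial : IntervalIntegrable (fun t => t ^ (Module.finrank ℝ V - 1) • (R - t) ^ a)
      volume 0 R := hpow.continuousOn_smul (by fun_prop)
  have hball : IntegrableOn (fun x : V => (R - ‖x‖) ^ a) (ball 0 R) μ :=
    (integrableOn_fun_norm_addHaar μ).2 (hradial.1.mono_set Ioo_subset_Ioc_self)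
  exact hball.lintegral_lt_top

lemma rieszMeasure_ball_prod_compl_lt_top [Nontrivial V] (R : ℝ) {p : ℝ}
    (hp : p ∈ Ioo (Module.finrank ℝ V : ℝ) (Module.finrank ℝ V + 1)) :
    rieszMeasure μ p (ball 0 R ×ˢ (ball 0 R)ᶜ) < ∞ := by
  rw [rieszMeasure_prod μ p measurableSet_ball measurableSet_ball.compl]
  refine (setLIntegral_mono (by fun_prop) fun x hx =>
    lintegral_compl_ball_norm_sub_rpow_le μ p hx).trans_lt ?_
  rw [lintegral_mul_const _ (by fun_prop)]
  exact ENNReal.mul_lt_top (lintegral_ball_sub_norm_rpow_lt_top μ R (by linarith [hp.2]))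
    (lintegral_compl_unitBall_norm_rpow_lt_top μ hp.1)

lemma rieszMeasure_straddlingPairs_ball_ne_top [Nontrivial V] (R : ℝ) {p : ℝ}
    (hp : p ∈ Ioo (Module.finrank ℝ V : ℝ) (Module.finrank ℝ V + 1)) :
    rieszMeasure μ p (straddlingPairs (ball 0 R)) ≠ ∞ := by
  have hfin := (rieszMeasure_ball_prod_compl_lt_top μ R hp).ne
  refine measure_union_ne_top hfin ?_
  rwa [rieszMeasure_prod_comm μ p measurableSet_ball.compl measurableSet_ball]

end BallInteraction

section Euclidean

variable {n : ℕ} {s : ℝ} {E : Set (EuclideanSpace ℝ (Fin n))}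

lemma Jfun_eq_rieszMeasure_crossingPairs {Ω : Set (EuclideanSpace ℝ (Fin n))}
    (hΩ : MeasurableSet Ω) (hE : MeasurableSet E) :
    Jfun n s Ω E = rieszMeasure volume (n + s) (crossingPairs Ω E) := by
  have hdisj : Disjoint ((E ∩ Ω) ×ˢ Eᶜ) ((E \ Ω) ×ˢ (Eᶜ ∩ Ω)) :=
    disjoint_sdiff_inter.symm.set_prod_left _ _
  rw [crossingPairs_eq_union, measure_union hdisj ((hE.diff hΩ).prod (hE.compl.inter hΩ)),
    rieszMeasure_prod _ _ (hE.inter hΩ) hE.compl,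
    rieszMeasure_prod _ _ (hE.diff hΩ) (hE.compl.inter hΩ)]
  rfl

lemma isMinimizerB1_iff :
    IsMinimizerB1 n s E ↔ IsNonlocalMinimizer (rieszMeasure volume (n + s)) (ball 0 1) E := by
  refine and_congr_right fun hE => forall₃_congr fun F hF _ => ?_
  rw [Jfun_eq_rieszMeasure_crossingPairs measurableSet_ball hE,
    Jfun_eq_rieszMeasure_crossingPairs measurableSet_ball hF]

lemma L1locIndicatorTendsto.tendsto_volume_symmDiff_inter
    {A : ℕ → Set (EuclideanSpace ℝ (Fin n))} (h : L1locIndicatorTendsto n A E)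
    (hA : ∀ k, MeasurableSet (A k)) (hE : MeasurableSet E)
    {K : Set (EuclideanSpace ℝ (Fin n))} (hK : IsCompact K) :
    Tendsto (fun k => volume (A k ∆ E ∩ K)) atTop (𝓝 0) := by
  have hfin (k : ℕ) : volume (A k ∆ E ∩ K) ≠ ∞ :=
    measure_ne_top_of_subset inter_subset_right hK.measure_lt_top.ne
  refine (ENNReal.tendsto_toReal_iff hfin ENNReal.zero_ne_top).1 ?_
  convert h K hK using 2 with k
  · rw [setIntegral_abs_indicator_sub_indicator _ (hA k) hE, measureReal_def]
  · exact ENNReal.toReal_zero.symm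

end Euclidean

/-- Compactness of minimizers: an `L¹_loc` limit of minimizers of `J_{B₁}` is a minimizer,
and the energies converge. -/
theorem minimizers_compactness (n : ℕ) (hn : 1 ≤ n) (s : ℝ) (hs : s ∈ Set.Ioo (0:ℝ) 1)
    (Ek : ℕ → Set (EuclideanSpace ℝ (Fin n))) (E : Set (EuclideanSpace ℝ (Fin n)))
    (hE : MeasurableSet E)
    (hmin : ∀ k, IsMinimizerB1 n s (Ek k))
    (hconv : L1locIndicatorTendsto n Ek E) :
    IsMinimizerB1 n s E ∧
      Tendsto (fun k => Jfun n s (ball (0 : EuclideanSpace ℝ (Fin n)) 1) (Ek k)) atTop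
        (nhds (Jfun n s (ball (0 : EuclideanSpace ℝ (Fin n)) 1) E)) := by
  have : NeZero n := ⟨Nat.one_le_iff_ne_zero.1 hn⟩
  have hp : (n : ℝ) + s ∈ Ioo (Module.finrank ℝ (EuclideanSpace ℝ (Fin n)) : ℝ)
      (Module.finrank ℝ (EuclideanSpace ℝ (Fin n)) + 1) := by
    simpa using hs
  have hac := rieszMeasure_absolutelyContinuous
    (volume : Measure (EuclideanSpace ℝ (Fin n))) (n + s)
  have hmeas (k : ℕ) : MeasurableSet (Ek k) := (hmin k).1
  simp_rw [isMinimizerB1_iff, Jfun_eq_rieszMeasure_crossingPairs measurableSet_ball (hmeas _),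
    Jfun_eq_rieszMeasure_crossingPairs measurableSet_ball hE] at hmin ⊢
  exact minimizers_compactness_general (Measure.quasiMeasurePreserving_fst.mono_left hac)
    (Measure.quasiMeasurePreserving_snd.mono_left hac) measurableSet_ball
    (rieszMeasure_straddlingPairs_ball_ne_top volume 1 hp) hE hmin
    fun K hK => hconv.tendsto_volume_symmDiff_inter hmeas hE hK
end
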